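/- Let q and p be two admissible VP densities on [0,T] × ℝᵈ for a continuous function β : [0,T] → ℝ, satisfying the regularity assumptions. Let ω : [0,T] → ℝ be continuously differentiable with ω(0) = 0, suppose KL(T) = 0, and assume t ↦ ω(t)·β(t)·I(t) and t ↦ ω'(t)·KL(t) are integrable on [0,T]. Then ∫₀ᵀ ω(t)·(β(t)/2)·I(t) dt = ∫₀ᵀ ω'(t)·KL(t) dt. -/

import Mathlib

/-!
The identity is the fundamental theorem of calculus for `ω · KL` combined with the dissipation
identity `KL' = -(β/2) I`, which is needed only almost everywhere where `ω β ≠ 0`: where `ω = 0` it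
carries no weight, and where `β = 0` both densities are stationary and `KL' = 0`
(`integral_deriv_eq_zero`).

The difficulty is that `q` and `p` are only separately regular in `t` and `x` and nothing is assumed
about the growth of their derivatives, so no dominated convergence is available to differentiate
under integrals. On an interval where `β` has a constant sign (`β ≥ 0` after reversing time) the
dissipation identity is obtained as follows.

* *One-sided Lipschitz bounds in time* (`lowLip`). On every ball a positive solution decreases at
  most linearly just after each time. By Baire's theorem the closure of the set of exceptional times
  would contain a relatively open piece on which `u`, its time derivative and its touching
  paraboloids are uniformly controlled (`bddTimes`). Across the gaps of that closed set, the solution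
  is compared with the paraboloids (`comparison`, `gap_bound`); positivity of the solution makes the
  comparison local. The two bounds combine and no exceptional time is left.
* *Weak equation* (`hasDerivWithinAt_integral`). The one-sided bound gives the weak inequality for
  nonnegative test functions (`weak_ineq`), and conservation of mass upgrades it to an equality
  (`defect_eq_zero`).
* *Dissipation* (`dissipation`). The entropy density `q log (q/p) - q + p` is jointly convex
  and homogeneous of degree one, hence touched from below at each time by a functional linear
  in `(q, p)`, whose time derivative is known from the weak equation. A continuous function touched
  from below everywhere by functions of derivative `g` is a primitive of `g`
  (`sub_eq_integral_of_touching`). Removing the spatial cutoff gives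
  `KL(b) - KL(a) = -∫ (β/2) I`.

Lebesgue differentiation on rational intervals then yields the identity almost everywhere
(`ae_weighted_deriv_eq`).
-/

open MeasureTheory Real Set

/-- Divergence of a vector field on `ℝᵈ` (Euclidean space): `div V x = ∑ i ∂ᵢ Vᵢ(x)`. -/
noncomputable def diverg {d : ℕ} (V : EuclideanSpace ℝ (Fin d) → EuclideanSpace ℝ (Fin d))
    (x : EuclideanSpace ℝ (Fin d)) : ℝ :=
  ∑ i, fderiv ℝ V x (EuclideanSpace.single i 1) i

/-- The VP Fokker–Planck flux field `y ↦ y·u(t,y) + ∇_x u(t,y)`. -/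
noncomputable def vpField {d : ℕ} (u : ℝ → EuclideanSpace ℝ (Fin d) → ℝ) (t : ℝ)
    (y : EuclideanSpace ℝ (Fin d)) : EuclideanSpace ℝ (Fin d) :=
  u t y • y + gradient (fun z => u t z) y

/-- `u` is an admissible VP density on `[0,T] × ℝᵈ` for `β`: strictly positive, `C¹` in time,
`C²` in space, with unit mass, satisfying the variance-preserving Fokker–Planck equation
`∂_t u = (β(t)/2) div_x (x u + ∇_x u)`. -/
structure AdmissibleVP (d : ℕ) (T : ℝ) (β : ℝ → ℝ)
    (u : ℝ → EuclideanSpace ℝ (Fin d) → ℝ) : Prop where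
  pos : ∀ t ∈ Icc (0 : ℝ) T, ∀ x, 0 < u t x
  contDiff_t : ∀ x, ContDiff ℝ 1 (fun t => u t x)
  contDiff_x : ∀ t ∈ Icc (0 : ℝ) T, ContDiff ℝ 2 (fun x => u t x)
  mass_one : ∀ t ∈ Icc (0 : ℝ) T, ∫ x, u t x = 1
  fokkerPlanck : ∀ t ∈ Icc (0 : ℝ) T, ∀ x,
    deriv (fun s => u s x) t = (β t / 2) * diverg (vpField u t) x

/-- The KL divergence `KL(t) = ∫ q(t,x) log (q(t,x)/p(t,x)) dx`. -/
noncomputable def KLt {d : ℕ} (q p : ℝ → EuclideanSpace ℝ (Fin d) → ℝ) (t : ℝ) : ℝ :=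
  ∫ x, q t x * Real.log (q t x / p t x)

/-- The relative Fisher information
`I(t) = ∫ q(t,x) ‖∇_x log q(t,x) − ∇_x log p(t,x)‖² dx`. -/
noncomputable def relFisher {d : ℕ} (q p : ℝ → EuclideanSpace ℝ (Fin d) → ℝ) (t : ℝ) : ℝ :=
  ∫ x, q t x *
    ‖gradient (fun y => Real.log (q t y)) x - gradient (fun y => Real.log (p t y)) x‖ ^ 2

/-- The regularity assumptions on the pair `(q, p)`: integrability of the KL and Fisher
integrands, differentiation of `KL` under the integral sign, and vanishing boundary terms. -/
structure VPReg (d : ℕ) (T : ℝ) (q p : ℝ → EuclideanSpace ℝ (Fin d) → ℝ) : Prop where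
  int_kl : ∀ t ∈ Icc (0 : ℝ) T,
    Integrable (fun x => q t x * |Real.log (q t x / p t x)|)
  int_fisher : ∀ t ∈ Icc (0 : ℝ) T,
    Integrable (fun x => q t x *
      ‖gradient (fun y => Real.log (q t y)) x - gradient (fun y => Real.log (p t y)) x‖ ^ 2)
  kl_hasDeriv : ∀ t ∈ Icc (0 : ℝ) T,
    HasDerivAt (KLt q p) (∫ x, deriv (fun s => q s x * Real.log (q s x / p s x)) t) t
  boundary_q : ∀ t ∈ Icc (0 : ℝ) T,
    ∫ x, diverg (fun y => (1 + Real.log (q t y / p t y)) • vpField q t y) x = 0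
  boundary_p : ∀ t ∈ Icc (0 : ℝ) T,
    ∫ x, diverg (fun y => (q t y / p t y) • vpField p t y) x = 0

open Filter Topology

/-! ### The Fokker–Planck operator and its adjoint -/

namespace VP

/-- Shorthand for `ℝᵈ` with its Euclidean norm. -/
abbrev Ed (d : ℕ) := EuclideanSpace ℝ (Fin d)

variable {d : ℕ}

/-- The partial derivative `∂ᵢ f`. -/
noncomputable def pd (i : Fin d) (f : Ed d → ℝ) (x : Ed d) : ℝ :=
  fderiv ℝ f x (EuclideanSpace.single i 1)

/-- The Laplacian `∑ᵢ ∂ᵢ∂ᵢ f`. -/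
noncomputable def lap (f : Ed d → ℝ) (x : Ed d) : ℝ := ∑ i, pd i (pd i f) x

/-- The Fokker–Planck operator in non-divergence form, `f ↦ Δf + x·∇f + d f`. -/
noncomputable def Lst (f : Ed d → ℝ) (x : Ed d) : ℝ := lap f x + fderiv ℝ f x x + d * f x

/-- The formal adjoint of `Lst`, the Ornstein–Uhlenbeck generator `f ↦ Δf - x·∇f`. -/
noncomputable def Lad (f : Ed d → ℝ) (x : Ed d) : ℝ := lap f x - fderiv ℝ f x x

lemma fderiv_eq_sum_pd (f : Ed d → ℝ) (x v : Ed d) :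
    fderiv ℝ f x v = ∑ i, v i * pd i f x := by
  have h : v = ∑ i, v i • EuclideanSpace.single i (1 : ℝ) := by
    ext j
    simp [Finset.sum_apply, Pi.single_apply]
  conv_lhs => rw [h]
  simp [pd]

lemma contDiff_pd {f : Ed d → ℝ} (hf : ContDiff ℝ 2 f) (i : Fin d) : ContDiff ℝ 1 (pd i f) :=
  (hf.fderiv_right (m := 1) (by norm_num)).clm_apply contDiff_const

lemma continuous_pd {f : Ed d → ℝ} (hf : ContDiff ℝ 1 f) (i : Fin d) : Continuous (pd i f) :=
  (hf.continuous_fderiv (by norm_num)).clm_apply continuous_const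

lemma continuous_lap {f : Ed d → ℝ} (hf : ContDiff ℝ 2 f) : Continuous (lap f) := by
  unfold lap
  exact continuous_finsetSum _ fun i _ => continuous_pd (contDiff_pd hf i) i

lemma continuous_fderiv_self {f : Ed d → ℝ} (hf : ContDiff ℝ 2 f) :
    Continuous (fun x => fderiv ℝ f x x) :=
  (hf.continuous_fderiv (by norm_num)).clm_apply continuous_id

lemma continuous_Lst {f : Ed d → ℝ} (hf : ContDiff ℝ 2 f) : Continuous (Lst f) :=
  ((continuous_lap hf).add (continuous_fderiv_self hf)).add (continuous_const.mul hf.continuous)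

lemma continuous_Lad {f : Ed d → ℝ} (hf : ContDiff ℝ 2 f) : Continuous (Lad f) :=
  (continuous_lap hf).sub (continuous_fderiv_self hf)

lemma pd_add {f g : Ed d → ℝ} {x : Ed d} (i : Fin d) (hf : DifferentiableAt ℝ f x)
    (hg : DifferentiableAt ℝ g x) : pd i (fun y => f y + g y) x = pd i f x + pd i g x := by
  simp [pd, fderiv_fun_add hf hg]

lemma pd_sub {f g : Ed d → ℝ} {x : Ed d} (i : Fin d) (hf : DifferentiableAt ℝ f x)
    (hg : DifferentiableAt ℝ g x) : pd i (fun y => f y - g y) x = pd i f x - pd i g x := by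
  simp [pd, fderiv_fun_sub hf hg]

lemma pd_mul {f g : Ed d → ℝ} {x : Ed d} (i : Fin d) (hf : DifferentiableAt ℝ f x)
    (hg : DifferentiableAt ℝ g x) :
    pd i (fun y => f y * g y) x = f x * pd i g x + g x * pd i f x := by
  simp [pd, fderiv_fun_mul hf hg]

lemma pd_comp {φ : ℝ → ℝ} {φ' : ℝ} {f : Ed d → ℝ} {x : Ed d} (i : Fin d)
    (hφ : HasDerivAt φ φ' (f x)) (hf : DifferentiableAt ℝ f x) :
    pd i (fun y => φ (f y)) x = φ' * pd i f x := by
  have := (hφ.comp_hasFDerivAt x hf.hasFDerivAt).fderiv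
  change fderiv ℝ (φ ∘ f) x _ = _
  rw [this]; simp [pd]

lemma hasFDerivAt_coord (i : Fin d) (x : Ed d) :
    HasFDerivAt (fun y : Ed d => y i) (EuclideanSpace.proj i : Ed d →L[ℝ] ℝ) x :=
  (EuclideanSpace.proj i : Ed d →L[ℝ] ℝ).hasFDerivAt

lemma contDiff_coord {n : WithTop ℕ∞} (i : Fin d) : ContDiff ℝ n (fun y : Ed d => y i) :=
  (EuclideanSpace.proj i : Ed d →L[ℝ] ℝ).contDiff

lemma pd_coord (i : Fin d) (x : Ed d) : pd i (fun y : Ed d => y i) x = 1 := by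
  simp [pd, (hasFDerivAt_coord i x).fderiv]

lemma gradient_apply (f : Ed d → ℝ) (x : Ed d) (i : Fin d) :
    gradient f x i = pd i f x := by
  have : inner ℝ (gradient f x) (EuclideanSpace.single i (1 : ℝ)) = pd i f x := by
    simp [gradient, pd]
  rw [← this, EuclideanSpace.inner_single_right]; simp

lemma differentiable_of_C2 {f : Ed d → ℝ} (hf : ContDiff ℝ 2 f) : Differentiable ℝ f :=
  hf.differentiable (by norm_num)

lemma differentiable_pd {f : Ed d → ℝ} (hf : ContDiff ℝ 2 f) (i : Fin d) :
    Differentiable ℝ (pd i f) :=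
  (contDiff_pd hf i).differentiable (by norm_num)

lemma diverg_eq {V : Ed d → Ed d} {x : Ed d} (hV : DifferentiableAt ℝ V x) :
    diverg V x = ∑ i, pd i (fun y => V y i) x := by
  unfold diverg
  refine Finset.sum_congr rfl fun i _ => ?_
  have h := ((hasFDerivAt_coord i (V x)).comp x hV.hasFDerivAt).fderiv
  change _ = fderiv ℝ ((fun y : Ed d => y i) ∘ V) x _
  rw [h]; simp

lemma diverg_vpField {u : ℝ → Ed d → ℝ} {t : ℝ} (hu : ContDiff ℝ 2 (u t)) (x : Ed d) :
    diverg (vpField u t) x = Lst (u t) x := by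
  have hg : ContDiff ℝ 1 (gradient (fun z => u t z)) := by
    unfold gradient
    exact (InnerProductSpace.toDual ℝ (Ed d)).symm.contDiff.comp
      (hu.fderiv_right (m := 1) (by norm_num))
  have hV : DifferentiableAt ℝ (vpField u t) x := by
    unfold vpField
    exact ((differentiable_of_C2 hu x).smul differentiableAt_id).add
      (hg.differentiable (by norm_num) x)
  rw [diverg_eq hV]
  have : ∀ i, pd i (fun y => vpField u t y i) x
      = pd i (pd i (u t)) x + x i * pd i (u t) x + u t x := by
    intro i
    have e : (fun y => vpField u t y i) = fun y => u t y * y i + pd i (u t) y := by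
      funext y; simp [vpField, gradient_apply]
    rw [e, pd_add i ((differentiable_of_C2 hu x).fun_mul (hasFDerivAt_coord i x).differentiableAt)
      (differentiable_pd hu i x),
      pd_mul i (differentiable_of_C2 hu x) (hasFDerivAt_coord i x).differentiableAt, pd_coord]
    ring
  simp only [this, Finset.sum_add_distrib, Lst, lap, fderiv_eq_sum_pd (u t) x x]
  simp

/-! ### Integration by parts for compactly supported functions -/

lemma tsupport_pd_subset (f : Ed d → ℝ) (i : Fin d) : tsupport (pd i f) ⊆ tsupport f := by
  refine closure_minimal (fun x hx => ?_) (isClosed_tsupport f)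
  by_contra h
  exact hx (by simp [pd, image_eq_zero_of_notMem_tsupport
    (fun h' => h (tsupport_fderiv_subset ℝ h'))])

lemma hasCompactSupport_pd {f : Ed d → ℝ} (hf : HasCompactSupport f) (i : Fin d) :
    HasCompactSupport (pd i f) := hf.mono' (subset_closure.trans (tsupport_pd_subset f i))

lemma integral_pd_eq_zero {F : Ed d → ℝ} (hF : ContDiff ℝ 1 F) (hs : HasCompactSupport F)
    (i : Fin d) : ∫ x, pd i F x = 0 := by
  have h := integral_mul_fderiv_eq_neg_fderiv_mul_of_integrable (𝕜 := ℝ) (μ := volume)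
    (f := fun _ : Ed d => (1 : ℝ)) (g := F) (v := EuclideanSpace.single i 1)
    (by simp)
    (by
      simp only [one_mul]
      exact (continuous_pd hF i).integrable_of_hasCompactSupport (hasCompactSupport_pd hs i))
    (by
      simp only [one_mul]
      exact hF.continuous.integrable_of_hasCompactSupport hs)
    (fun x _ => differentiableAt_const _) (fun x _ => hF.differentiable (by norm_num) x)
  simpa [pd] using h

/-- Divergence theorem for a finite family of compactly supported components. -/
lemma integral_sum_pd_eq_zero {F : Fin d → Ed d → ℝ} (hF : ∀ i, ContDiff ℝ 1 (F i))
    (hs : ∀ i, HasCompactSupport (F i)) : ∫ x, ∑ i, pd i (F i) x = 0 := by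
  rw [integral_finsetSum]
  · exact Finset.sum_eq_zero fun i _ => integral_pd_eq_zero (hF i) (hs i) i
  · exact fun i _ => (continuous_pd (hF i) i).integrable_of_hasCompactSupport
      (hasCompactSupport_pd (hs i) i)

lemma hasCompactSupport_lap {f : Ed d → ℝ} (hf : HasCompactSupport f) :
    HasCompactSupport (lap f) := by
  refine hf.mono' fun x hx => ?_
  by_contra h
  refine hx (Finset.sum_eq_zero fun i _ => ?_)
  exact image_eq_zero_of_notMem_tsupport
    (fun h' => h (tsupport_pd_subset _ i (tsupport_pd_subset _ i h')))

lemma hasCompactSupport_Lad {f : Ed d → ℝ} (hf : HasCompactSupport f) :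
    HasCompactSupport (Lad f) := by
  refine hf.mono' fun x hx => ?_
  by_contra h
  refine hx ?_
  have h1 : lap f x = 0 := Finset.sum_eq_zero fun i _ => image_eq_zero_of_notMem_tsupport
    (fun h' => h (tsupport_pd_subset _ i (tsupport_pd_subset _ i h')))
  have h2 : fderiv ℝ f x = 0 := image_eq_zero_of_notMem_tsupport
    (fun h' => h (tsupport_fderiv_subset ℝ h'))
  simp [Lad, h1, h2]

lemma integral_Lst_eq_zero {z : Ed d → ℝ} (hz : ContDiff ℝ 2 z) (hs : HasCompactSupport z) :
    ∫ x, Lst z x = 0 := by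
  have h := integral_sum_pd_eq_zero (F := fun i y => pd i z y + y i * z y)
    (fun i => (contDiff_pd hz i).add ((contDiff_coord i).mul (hz.of_le (by norm_num))))
    (fun i => (hasCompactSupport_pd hs i).add hs.mul_left)
  rw [← h]
  congr 1; funext x
  have e : ∀ i, pd i (fun y => pd i z y + y i * z y) x
      = pd i (pd i z) x + x i * pd i z x + z x := by
    intro i
    rw [pd_add i (differentiable_pd hz i x)
      ((hasFDerivAt_coord i x).differentiableAt.fun_mul (differentiable_of_C2 hz x)),
      pd_mul i (hasFDerivAt_coord i x).differentiableAt (differentiable_of_C2 hz x), pd_coord]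
    ring
  simp only [e, Finset.sum_add_distrib, Lst, lap, fderiv_eq_sum_pd z x x]
  simp

lemma integral_mul_Lst {z η : Ed d → ℝ} (hz : ContDiff ℝ 2 z) (hη : ContDiff ℝ 2 η)
    (hs : HasCompactSupport η) : ∫ x, η x * Lst z x = ∫ x, z x * Lad η x := by
  have h := integral_sum_pd_eq_zero
    (F := fun i y => (η y * pd i z y - z y * pd i η y) + y i * (η y * z y))
    (fun i => (((hη.of_le (by norm_num)).mul (contDiff_pd hz i)).sub
      ((hz.of_le (by norm_num)).mul (contDiff_pd hη i))).add
      ((contDiff_coord i).mul ((hη.of_le (by norm_num)).mul (hz.of_le (by norm_num)))))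
    (fun i => ((hs.mul_right).sub ((hasCompactSupport_pd hs i).mul_left)).add
      (HasCompactSupport.mul_left hs.mul_right))
  have e : ∀ x, ∑ i, pd i (fun y => (η y * pd i z y - z y * pd i η y) + y i * (η y * z y)) x
      = η x * Lst z x - z x * Lad η x := by
    intro x
    have dz := differentiable_of_C2 hz x
    have dη := differentiable_of_C2 hη x
    have e : ∀ i, pd i (fun y => (η y * pd i z y - z y * pd i η y) + y i * (η y * z y)) x
        = η x * pd i (pd i z) x - z x * pd i (pd i η) x + η x * (x i * pd i z x)
          + z x * (x i * pd i η x) + η x * z x := by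
      intro i
      have dc := (hasFDerivAt_coord i x).differentiableAt
      rw [pd_add i ((dη.fun_mul (differentiable_pd hz i x)).fun_sub (dz.fun_mul (differentiable_pd hη i x)))
        (dc.fun_mul (dη.fun_mul dz)), pd_sub i (dη.fun_mul (differentiable_pd hz i x))
        (dz.fun_mul (differentiable_pd hη i x)), pd_mul i dη (differentiable_pd hz i x),
        pd_mul i dz (differentiable_pd hη i x), pd_mul i dc (dη.fun_mul dz), pd_mul i dη dz, pd_coord]
      ring
    simp only [e, Finset.sum_add_distrib, Finset.sum_sub_distrib, ← Finset.mul_sum, Lst, Lad, lap,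
      fderiv_eq_sum_pd z x x, fderiv_eq_sum_pd η x x]
    simp
    ring
  simp only [e] at h
  rw [integral_sub] at h
  · linarith
  · exact (hη.continuous.mul (continuous_Lst hz)).integrable_of_hasCompactSupport hs.mul_right
  · exact (hz.continuous.mul (continuous_Lad hη)).integrable_of_hasCompactSupport
      (hasCompactSupport_Lad hs).mul_left

/-! ### Real-variable tools -/

lemma hasDerivAt_max_pow (n : ℕ) (s : ℝ) :
    HasDerivAt (fun s : ℝ => max s 0 ^ (n + 2)) ((n + 2 : ℝ) * max s 0 ^ (n + 1)) s := by
  have hc : ∀ m : ℕ, Continuous fun s : ℝ => max s 0 ^ m := fun m => by fun_prop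
  have key : ∀ y : ℝ, y ≠ 0 →
      HasDerivAt (fun s : ℝ => max s 0 ^ (n + 2)) ((n + 2 : ℝ) * max y 0 ^ (n + 1)) y := by
    intro y hy
    rcases lt_or_gt_of_ne hy with h | h
    · have e : (fun s : ℝ => max s 0 ^ (n + 2)) =ᶠ[𝓝 y] fun _ => 0 := by
        filter_upwards [Iio_mem_nhds h] with s hs
        simp [max_eq_right (le_of_lt (mem_Iio.1 hs))]
      have : HasDerivAt (fun _ : ℝ => (0 : ℝ)) 0 y := hasDerivAt_const y 0
      simpa [max_eq_right h.le] using this.congr_of_eventuallyEq e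
    · have e : (fun s : ℝ => max s 0 ^ (n + 2)) =ᶠ[𝓝 y] fun s => s ^ (n + 2) := by
        filter_upwards [Ioi_mem_nhds h] with s hs
        simp [max_eq_left (le_of_lt (mem_Ioi.1 hs))]
      have := hasDerivAt_pow (n + 2) y
      rw [max_eq_left h.le]
      refine (this.congr_of_eventuallyEq e).congr_deriv ?_
      push_cast; rfl
  rcases eq_or_ne s 0 with rfl | hs
  · exact hasDerivAt_of_hasDerivAt_of_ne key (hc _).continuousAt
      (continuous_const.mul (hc _)).continuousAt
  · exact key s hs

lemma hasDerivAt_cube (s : ℝ) : HasDerivAt (fun s : ℝ => max s 0 ^ 3) (3 * max s 0 ^ 2) s := by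
  have := hasDerivAt_max_pow 1 s
  norm_num at this
  exact this

lemma hasDerivAt_sq (s : ℝ) : HasDerivAt (fun s : ℝ => max s 0 ^ 2) (2 * max s 0) s := by
  have := hasDerivAt_max_pow 0 s
  norm_num at this
  exact this

lemma contDiff_cube : ContDiff ℝ 2 (fun s : ℝ => max s 0 ^ 3) := by
  have h2 : ContDiff ℝ 1 (fun s : ℝ => max s 0 ^ 2) := by
    rw [contDiff_one_iff_deriv]
    refine ⟨fun s => (hasDerivAt_sq s).differentiableAt, ?_⟩
    rw [funext fun s => (hasDerivAt_sq s).deriv]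
    fun_prop
  have : (2 : WithTop ℕ∞) = 1 + 1 := by norm_num
  rw [this, contDiff_succ_iff_deriv]
  refine ⟨fun s => (hasDerivAt_cube s).differentiableAt, by simp, ?_⟩
  rw [funext fun s => (hasDerivAt_cube s).deriv]
  exact contDiff_const.mul h2

/-- Kato-type inequality: `Φ'(w) L*w ≤ L*(Φ(w)) + 2 d Φ(w)` for the convex function `Φ(s) = s₊³`. -/
lemma kato_cube {w : Ed d → ℝ} (hw : ContDiff ℝ 2 w) (x : Ed d) :
    3 * max (w x) 0 ^ 2 * Lst w x
      ≤ Lst (fun y => max (w y) 0 ^ 3) x + 2 * d * max (w x) 0 ^ 3 := by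
  have dw := differentiable_of_C2 hw
  have e1 : ∀ i, pd i (fun y => max (w y) 0 ^ 3) = fun y => 3 * (max (w y) 0 ^ 2) * pd i w y :=
    fun i => funext fun y => pd_comp i (hasDerivAt_cube (w y)) (dw y)
  have e2 : ∀ i, pd i (pd i (fun y => max (w y) 0 ^ 3)) x
      = 3 * max (w x) 0 ^ 2 * pd i (pd i w) x + 6 * max (w x) 0 * pd i w x ^ 2 := by
    intro i
    have hd : HasDerivAt (fun s : ℝ => 3 * max s 0 ^ 2) (3 * (2 * max (w x) 0)) (w x) :=
      (hasDerivAt_sq (w x)).const_mul 3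
    rw [e1 i, pd_mul (f := fun y => 3 * (max (w y) 0 ^ 2)) i
      (hd.comp_hasFDerivAt x (dw x).hasFDerivAt).differentiableAt (differentiable_pd hw i x),
      pd_comp i hd (dw x)]
    ring
  have e3 : fderiv ℝ (fun y => max (w y) 0 ^ 3) x x = 3 * max (w x) 0 ^ 2 * fderiv ℝ w x x := by
    rw [fderiv_eq_sum_pd _ x x, fderiv_eq_sum_pd w x x, Finset.mul_sum]
    refine Finset.sum_congr rfl fun i _ => ?_
    rw [e1 i]; ring
  have e4 : lap (fun y => max (w y) 0 ^ 3) x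
      = 3 * max (w x) 0 ^ 2 * lap w x + 6 * max (w x) 0 * ∑ i, pd i w x ^ 2 := by
    simp only [lap, e2, Finset.sum_add_distrib, Finset.mul_sum]
  have h5 : max (w x) 0 ^ 2 * w x = max (w x) 0 ^ 3 := by
    rcases le_total (w x) 0 with h | h
    · simp [max_eq_right h]
    · rw [max_eq_left h]; ring
  have h6 : 0 ≤ 6 * max (w x) 0 * ∑ i, pd i w x ^ 2 :=
    mul_nonneg (by positivity) (Finset.sum_nonneg fun i _ => sq_nonneg _)
  simp only [Lst, e3, e4]
  have h7 : 3 * max (w x) 0 ^ 2 * (d * w x) = 3 * d * max (w x) 0 ^ 3 := by rw [← h5]; ring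
  linarith [h7]

/-- A Scheffé argument: nonnegative functions that are pointwise continuous in `t` and whose total
integral is continuous in `t` depend continuously on `t` when tested against a bounded function. -/
lemma continuousOn_integral_mul {S : Set ℝ} {f : ℝ → Ed d → ℝ} {m : Ed d → ℝ} {C : ℝ}
    (h0 : ∀ t ∈ S, ∀ x, 0 ≤ f t x) (hi : ∀ t ∈ S, Integrable (f t))
    (hc : ContinuousOn (fun t => ∫ x, f t x) S) (hx : ∀ x, ContinuousOn (fun t => f t x) S)
    (hm : Continuous m) (hC : ∀ x, |m x| ≤ C) :
    ContinuousOn (fun t => ∫ x, m x * f t x) S := by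
  intro s hs
  have him : ∀ t ∈ S, Integrable (fun x => m x * f t x) := fun t ht =>
    (hi t ht).bdd_mul hm.aestronglyMeasurable (Eventually.of_forall hC)
  have hC0 : 0 ≤ C := (abs_nonneg _).trans (hC 0)
  -- the positive part of `f s - f t` is dominated by `f s`
  have hpos : Tendsto (fun t => ∫ x, max (f s x - f t x) 0) (𝓝[S] s) (𝓝 0) := by
    have h00 : (∫ _ : Ed d, (0 : ℝ)) = 0 := by simp
    refine (tendsto_integral_filter_of_dominated_convergence (f := fun _ => (0 : ℝ)) (f s)
      ?_ ?_ (hi s hs) ?_).trans_eq (congrArg 𝓝 h00)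
    · filter_upwards [self_mem_nhdsWithin] with t ht
      exact (((hi s hs).sub (hi t ht)).pos_part).aestronglyMeasurable
    · filter_upwards [self_mem_nhdsWithin] with t ht
      refine Eventually.of_forall fun x => ?_
      rw [Real.norm_eq_abs, abs_of_nonneg (le_max_right _ _)]
      exact max_le (by linarith [h0 t ht x]) (h0 s hs x)
    · refine Eventually.of_forall fun x => ?_
      have h1 : Tendsto (fun t => max (f s x - f t x) 0) (𝓝[S] s) (𝓝 (max (f s x - f s x) 0)) :=
        ((tendsto_const_nhds.sub (hx x s hs)).max tendsto_const_nhds)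
      simpa using h1
  have habs : Tendsto (fun t => C * ((∫ x, f t x) - (∫ x, f s x)
      + 2 * ∫ x, max (f s x - f t x) 0)) (𝓝[S] s) (𝓝 0) := by
    have h1 : Tendsto (fun t => (∫ x, f t x)) (𝓝[S] s) (𝓝 (∫ x, f s x)) := hc s hs
    have := ((h1.sub_const (∫ x, f s x)).add (hpos.const_mul 2)).const_mul C
    simpa using this
  rw [ContinuousWithinAt, tendsto_iff_norm_sub_tendsto_zero]
  refine squeeze_zero' (Eventually.of_forall fun t => norm_nonneg _) ?_ habs
  filter_upwards [self_mem_nhdsWithin] with t ht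
  rw [← integral_sub (him t ht) (him s hs)]
  calc ‖∫ x, (m x * f t x - m x * f s x)‖
      ≤ ∫ x, C * ((f t x - f s x) + 2 * max (f s x - f t x) 0) := by
        refine norm_integral_le_of_norm_le
          ((((hi t ht).sub (hi s hs)).add (((hi s hs).sub (hi t ht)).pos_part.const_mul 2)).const_mul C)
          (Eventually.of_forall fun x => ?_)
        rw [← mul_sub, norm_mul, Real.norm_eq_abs, Real.norm_eq_abs]
        refine mul_le_mul (hC x) ?_ (abs_nonneg _) hC0
        rcases le_total (f s x - f t x) 0 with h | h
        · rw [max_eq_right h, abs_of_nonneg (by linarith)]; linarith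
        · rw [max_eq_left h, abs_of_nonpos (by linarith)]; linarith
    _ = _ := by
        have hI1 : Integrable (fun x => f t x - f s x) := (hi t ht).sub (hi s hs)
        have hI2 : Integrable (fun x => 2 * max (f s x - f t x) 0) :=
          ((hi s hs).sub (hi t ht)).pos_part.const_mul 2
        rw [integral_const_mul, integral_add hI1 hI2, integral_const_mul,
          integral_sub (hi t ht) (hi s hs)]

/-- A continuous function whose upper right Dini derivative is bounded by an integrable function
everywhere on `[a, b)` grows at most by the integral of that function. -/
lemma sub_le_integral_of_dini {M g : ℝ → ℝ} {a b : ℝ} (hab : a ≤ b)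
    (hcont : ContinuousOn M (Icc a b))
    (hd : ∀ x ∈ Ico a b, ∀ y, g x < y → ∀ᶠ u in 𝓝[>] x, M u - M x ≤ (u - x) * y)
    (gint : IntegrableOn g (Icc a b)) : M b - M a ≤ ∫ y in a..b, g y := by
  refine le_of_forall_pos_le_add fun ε εpos => ?_
  -- `G` is a lower semicontinuous function above `g` with almost the same integral
  rcases exists_lt_lowerSemicontinuous_integral_lt g gint εpos with
    ⟨G, g_lt_G, Gcont, Gint, Glt_top, hG⟩
  set s := {t | M t - M a ≤ ∫ u in a..t, (G u).toReal} ∩ Icc a b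
  have s_closed : IsClosed s := by
    have : ContinuousOn (fun t => (M t - M a, ∫ u in a..t, (G u).toReal)) (Icc a b) := by
      rw [← uIcc_of_le hab] at Gint hcont ⊢
      exact (hcont.sub continuousOn_const).prodMk
        (intervalIntegral.continuousOn_primitive_interval Gint)
    simp only [s, inter_comm]
    exact this.preimage_isClosed_of_isClosed isClosed_Icc OrderClosedTopology.isClosed_le'
  have main : Icc a b ⊆ {t | M t - M a ≤ ∫ u in a..t, (G u).toReal} := by
    refine s_closed.Icc_subset_of_forall_exists_gt
      (by simp) fun t ht v t_lt_v => ?_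
    obtain ⟨y, g_lt_y', y_lt_G⟩ : ∃ y : ℝ, (g t : EReal) < y ∧ (y : EReal) < G t :=
      EReal.lt_iff_exists_real_btwn.1 (g_lt_G t)
    have I1 : ∀ᶠ u in 𝓝[>] t, (u - t) * y ≤ ∫ w in t..u, (G w).toReal := by
      have B : ∀ᶠ u in 𝓝 t, (y : EReal) < G u := Gcont.lowerSemicontinuousAt _ _ y_lt_G
      rcases mem_nhds_iff_exists_Ioo_subset.1 B with ⟨l, r, ⟨hl, hr⟩, H⟩
      have : Ioo t (min r b) ∈ 𝓝[>] t := Ioo_mem_nhdsGT (lt_min hr ht.right.right)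
      filter_upwards [this] with u hu
      have I : Icc t u ⊆ Icc a b := Icc_subset_Icc ht.2.1 (hu.2.le.trans (min_le_right _ _))
      calc
        (u - t) * y = ∫ _ in Icc t u, y := by
          simp only [MeasureTheory.integral_const, MeasurableSet.univ, measureReal_restrict_apply,
            univ_inter, hu.left.le, Real.volume_real_Icc_of_le, smul_eq_mul]
        _ ≤ ∫ w in t..u, (G w).toReal := by
          rw [intervalIntegral.integral_of_le hu.1.le, ← integral_Icc_eq_integral_Ioc]
          apply setIntegral_mono_ae_restrict
          · simp
          · exact IntegrableOn.mono_set Gint I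
          · have C1 : ∀ᵐ x : ℝ ∂volume.restrict (Icc t u), G x < ⊤ :=
              ae_mono (Measure.restrict_mono I le_rfl) Glt_top
            have C2 : ∀ᵐ x : ℝ ∂volume.restrict (Icc t u), x ∈ Icc t u :=
              ae_restrict_mem measurableSet_Icc
            filter_upwards [C1, C2] with x Gx hx
            apply EReal.coe_le_coe_iff.1
            have : x ∈ Ioo l r := by
              simp only [hl.trans_le hx.left,
                (hx.right.trans_lt hu.right).trans_le (min_le_left r b), mem_Ioo, and_self_iff]
            refine (H this).out.le.trans_eq ?_
            exact (EReal.coe_toReal Gx.ne (g_lt_G x).ne_bot).symm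
    have I2 : ∀ᶠ u in 𝓝[>] t, M u - M t ≤ (u - t) * y :=
      hd t ht.2 y (EReal.coe_lt_coe_iff.1 g_lt_y')
    have I4 : ∀ᶠ u in 𝓝[>] t, u ∈ Ioc t (min v b) := Ioc_mem_nhdsGT <| lt_min t_lt_v ht.2.2
    rcases ((I1.and I2).and I4).exists with ⟨x, ⟨hx1, hx2⟩, h'x⟩
    refine ⟨x, ?_, Ioc_subset_Ioc le_rfl (min_le_left _ _) h'x⟩
    calc
      M x - M a = M t - M a + (M x - M t) := by abel
      _ ≤ (∫ w in a..t, (G w).toReal) + ∫ w in t..x, (G w).toReal :=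
        add_le_add ht.1 (hx2.trans hx1)
      _ = ∫ w in a..x, (G w).toReal := by
        apply intervalIntegral.integral_add_adjacent_intervals
        · rw [intervalIntegrable_iff_integrableOn_Ioc_of_le ht.2.1]
          exact IntegrableOn.mono_set Gint
            (Ioc_subset_Icc_self.trans (Icc_subset_Icc le_rfl ht.2.2.le))
        · rw [intervalIntegrable_iff_integrableOn_Ioc_of_le h'x.1.le]
          apply IntegrableOn.mono_set Gint
          exact Ioc_subset_Icc_self.trans (Icc_subset_Icc ht.2.1 (h'x.2.trans (min_le_right _ _)))
  calc
    M b - M a ≤ ∫ y in a..b, (G y).toReal := main (right_mem_Icc.2 hab)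
    _ ≤ (∫ y in a..b, g y) + ε := by
      convert! hG.le <;>
        · rw [intervalIntegral.integral_of_le hab]
          simp only [integral_Icc_eq_integral_Ioc', Real.volume_singleton]

/-- If at every `s ∈ [a, b]` the continuous function `M` is touched from below by a function with
derivative `g s` at `s`, and `g` is integrable, then `M b - M a = ∫ g`. Touching from below bounds
the right Dini derivatives of `M` from below and the left ones from above. -/
lemma sub_eq_integral_of_touching {M g : ℝ → ℝ} {a b : ℝ} (hab : a ≤ b)
    (hcont : ContinuousOn M (Icc a b))
    (hN : ∀ s ∈ Icc a b, ∃ N : ℝ → ℝ, (∀ t ∈ Icc a b, N t ≤ M t) ∧ N s = M s ∧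
      HasDerivWithinAt N (g s) (Icc a b) s)
    (gint : IntegrableOn g (Icc a b)) : M b - M a = ∫ y in a..b, g y := by
  apply le_antisymm
  · have hmaps : MapsTo (fun t : ℝ => -t) (Icc (-b) (-a)) (Icc a b) := by
      intro t ht; simp only [mem_Icc] at *; constructor <;> linarith
    have gi' : IntegrableOn (fun t => g (-t)) (Icc (-b) (-a)) := by
      have e : (fun t : ℝ => -t) ⁻¹' (Icc a b) = Icc (-b) (-a) := by simp
      rw [← e]
      exact (Measure.measurePreserving_neg (volume : Measure ℝ)).integrableOn_comp_preimage
        (Homeomorph.neg ℝ).measurableEmbedding |>.2 gint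
    have h := sub_le_integral_of_dini (M := fun t => -M (-t)) (g := fun t => g (-t))
      (a := -b) (b := -a) (by linarith) (hcont.comp continuous_neg.continuousOn hmaps).neg ?_ gi'
    · simp only [neg_neg, intervalIntegral.integral_comp_neg] at h
      linarith
    · intro x hx y hy
      have hxm : -x ∈ Icc a b := hmaps ⟨hx.1, hx.2.le⟩
      obtain ⟨N, hNM, hNs, hNd⟩ := hN (-x) hxm
      have hd : HasDerivWithinAt (fun t => -N (-t)) (g (-x)) (Icc (-b) (-a)) x := by
        have := (HasDerivWithinAt.comp x (h := fun t : ℝ => -t) (h₂ := N) hNd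
          (hasDerivWithinAt_neg x (Icc (-b) (-a))) hmaps).neg
        exact this.congr_deriv (by simp)
      have hd' : HasDerivWithinAt (fun t => -N (-t)) (g (-x)) (Ioi x) x := by
        refine (hd.mono_of_mem_nhdsWithin ?_)
        exact mem_of_superset (Ioo_mem_nhdsGT hx.2) fun z hz => ⟨hx.1.trans hz.1.le, hz.2.le⟩
      filter_upwards [hd'.limsup_slope_le' (notMem_Ioi.2 le_rfl) hy, Ioo_mem_nhdsGT hx.2]
        with u hu hu2
      have h1 := mul_le_mul_of_nonneg_left hu.le (sub_pos.2 hu2.1).le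
      rw [← smul_eq_mul, sub_smul_slope] at h1
      have h2 := hNM (-u) (hmaps ⟨hx.1.trans hu2.1.le, hu2.2.le⟩)
      simp only [vsub_eq_sub] at h1
      rw [hNs] at h1
      linarith
  · have h := sub_le_integral_of_dini (M := fun t => -M t) (g := fun t => -g t) hab hcont.neg ?_
      gint.neg
    · rw [intervalIntegral.integral_neg] at h; linarith
    · intro x hx y hy
      obtain ⟨N, hNM, hNs, hNd⟩ := hN x ⟨hx.1, hx.2.le⟩
      have hd' : HasDerivWithinAt (fun t => -N t) (-g x) (Ioi x) x := by
        refine (hNd.neg.mono_of_mem_nhdsWithin ?_)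
        exact mem_of_superset (Ioo_mem_nhdsGT hx.2) fun z hz => ⟨hx.1.trans hz.1.le, hz.2.le⟩
      filter_upwards [hd'.limsup_slope_le' (notMem_Ioi.2 le_rfl) hy, Ioo_mem_nhdsGT hx.2]
        with u hu hu2
      have h1 := mul_le_mul_of_nonneg_left hu.le (sub_pos.2 hu2.1).le
      rw [← smul_eq_mul, sub_smul_slope] at h1
      have h2 := hNM u ⟨hx.1.trans hu2.1.le, hu2.2.le⟩
      simp only [vsub_eq_sub] at h1
      rw [hNs] at h1
      linarith

/-! ### One-sided Lipschitz bounds in time -/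

/-- A positive classical solution of unit mass of `∂ₜu = (β/2) L*u` on `[a, b] × ℝᵈ`. -/
structure Sol (a b : ℝ) (β : ℝ → ℝ) (u : ℝ → Ed d → ℝ) : Prop where
  pos : ∀ t ∈ Icc a b, ∀ x, 0 < u t x
  contDiff_t : ∀ x, ContDiff ℝ 1 (fun t => u t x)
  contDiff_x : ∀ t ∈ Icc a b, ContDiff ℝ 2 (u t)
  mass_one : ∀ t ∈ Icc a b, ∫ x, u t x = 1
  eq : ∀ t ∈ Icc a b, ∀ x, deriv (fun s => u s x) t = β t / 2 * Lst (u t) x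

lemma Sol.mono {a b a' b' : ℝ} {β : ℝ → ℝ} {u : ℝ → Ed d → ℝ} (h : Sol a b β u)
    (ha : a ≤ a') (hb : b' ≤ b) : Sol a' b' β u :=
  have hs : Icc a' b' ⊆ Icc a b := Icc_subset_Icc ha hb
  ⟨fun t ht => h.pos t (hs ht), h.contDiff_t, fun t ht => h.contDiff_x t (hs ht),
    fun t ht => h.mass_one t (hs ht), fun t ht => h.eq t (hs ht)⟩

lemma Sol.integrable {a b : ℝ} {β : ℝ → ℝ} {u : ℝ → Ed d → ℝ} (h : Sol a b β u)
    {t : ℝ} (ht : t ∈ Icc a b) : Integrable (u t) := by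
  by_contra hn
  have := h.mass_one t ht
  rw [integral_undef hn] at this
  exact zero_ne_one this

lemma Sol.hasDerivAt {a b : ℝ} {β : ℝ → ℝ} {u : ℝ → Ed d → ℝ} (h : Sol a b β u)
    {t : ℝ} (ht : t ∈ Icc a b) (x : Ed d) :
    HasDerivAt (fun s => u s x) (β t / 2 * Lst (u t) x) t := by
  rw [← h.eq t ht x]
  exact ((h.contDiff_t x).differentiable (by norm_num) t).hasDerivAt

lemma Sol.continuous_t {a b : ℝ} {β : ℝ → ℝ} {u : ℝ → Ed d → ℝ} (h : Sol a b β u)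
    (x : Ed d) : Continuous (fun t => u t x) := (h.contDiff_t x).continuous

/-- Differentiation under the integral sign with one-sided control: an upper bound on the
difference quotients alone bounds the upper right Dini derivative of the integral. The quotients
are truncated from below, where the limit `G` is already bounded. -/
lemma upper_dini_integral {F : ℝ → Ed d → ℝ} {G : Ed d → ℝ} {τ ρ K m : ℝ}
    (hi : ∀ᶠ t in 𝓝[>] τ, Integrable (F t)) (hiτ : Integrable (F τ))
    (h0 : ∀ᶠ t in 𝓝[>] τ, ∀ x, ρ < ‖x‖ → F t x = F τ x)
    (hK : ∀ᶠ t in 𝓝[>] τ, ∀ x, ‖x‖ ≤ ρ → F t x - F τ x ≤ K * (t - τ))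
    (hG : ∀ x, HasDerivAt (fun t => F t x) (G x) τ)
    (hm : ∀ x, |G x| ≤ m) {ε : ℝ} (hε : 0 < ε) :
    ∀ᶠ t in 𝓝[>] τ, (∫ x, F t x) - ∫ x, F τ x ≤ ((∫ x, G x) + ε) * (t - τ) := by
  have hm0 : 0 ≤ m := (abs_nonneg _).trans (hm 0)
  have hgt : ∀ᶠ t in 𝓝[>] τ, τ < t := self_mem_nhdsWithin
  have hq : ∀ x, Tendsto (fun t => (t - τ)⁻¹ * (F t x - F τ x)) (𝓝[>] τ) (𝓝 (G x)) := by
    intro x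
    have h1 : Tendsto (slope (fun t => F t x) τ) (𝓝[>] τ) (𝓝 (G x)) :=
      (hasDerivAt_iff_tendsto_slope.1 (hG x)).mono_left
        (nhdsWithin_mono τ (fun z (hz : τ < z) => hz.ne'))
    exact h1
  have hInt : Integrable ((Metric.closedBall (0 : Ed d) ρ).indicator fun _ => max |K| m) :=
    (integrable_indicator_iff Metric.isClosed_closedBall.measurableSet).2
      (integrableOn_const (isCompact_closedBall _ _).measure_lt_top.ne)
  have hae : ∀ᶠ t in 𝓝[>] τ,
      AEStronglyMeasurable (fun x => max ((t - τ)⁻¹ * (F t x - F τ x)) (-m)) volume := by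
    filter_upwards [hi] with t ht
    exact (((ht.sub hiτ).const_mul (t - τ)⁻¹).aestronglyMeasurable.sup aestronglyMeasurable_const)
  have hbd : ∀ᶠ t in 𝓝[>] τ, ∀ x, ‖max ((t - τ)⁻¹ * (F t x - F τ x)) (-m)‖
      ≤ (Metric.closedBall (0 : Ed d) ρ).indicator (fun _ => max |K| m) x := by
    filter_upwards [h0, hK, hgt] with t h1 h2 h3 x
    by_cases hx : ‖x‖ ≤ ρ
    · rw [indicator_of_mem (by simpa using hx), Real.norm_eq_abs, abs_le]
      have h4 : (t - τ)⁻¹ * (F t x - F τ x) ≤ K := by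
        rw [inv_mul_le_iff₀ (sub_pos.2 h3)]
        linarith [h2 x hx]
      constructor
      · exact (neg_le_neg (le_max_right _ _)).trans (le_max_right _ _)
      · exact max_le ((h4.trans (le_abs_self K)).trans (le_max_left _ _))
          ((neg_nonpos.2 hm0).trans (hm0.trans (le_max_right _ _)))
    · rw [indicator_of_notMem (by simpa using hx), h1 x (not_le.1 hx)]
      simp [hm0]
  have hlim : Tendsto (fun t => ∫ x, max ((t - τ)⁻¹ * (F t x - F τ x)) (-m)) (𝓝[>] τ)
      (𝓝 (∫ x, G x)) := by
    refine tendsto_integral_filter_of_dominated_convergence _ hae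
      (hbd.mono fun t ht => Eventually.of_forall ht) hInt (Eventually.of_forall fun x => ?_)
    have h1 := (hq x).max (tendsto_const_nhds (x := -m))
    rwa [max_eq_left (neg_le_of_abs_le (hm x))] at h1
  filter_upwards [hlim.eventually_lt_const (lt_add_of_pos_right _ hε), hi, hgt, hae, hbd]
    with t h1 h2 h3 h4 h5
  have h6 : Integrable (fun x => max ((t - τ)⁻¹ * (F t x - F τ x)) (-m)) :=
    hInt.mono' h4 (Eventually.of_forall h5)
  have h7 : Integrable (fun x => (t - τ)⁻¹ * (F t x - F τ x)) := (h2.sub hiτ).const_mul _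
  have h8 := (integral_mono h7 h6 fun x => le_max_left _ _).trans h1.le
  rw [integral_const_mul, integral_sub h2 hiτ, inv_mul_le_iff₀ (sub_pos.2 h3)] at h8
  linarith

/-- The solution decreases at most linearly to the right of time `τ`, uniformly on every ball of
radius smaller than `k`; such a time is called good. -/
def LowLip (u : ℝ → Ed d → ℝ) (k τ : ℝ) : Prop :=
  ∀ ρ < k, ∃ C : ℝ, ∀ᶠ t in 𝓝[>] τ, ∀ y, ‖y‖ ≤ ρ → u τ y - C * (t - τ) ≤ u t y

/-- The cubed positive part of `g - C (t - a) - u(t)`. -/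
noncomputable def excess (u : ℝ → Ed d → ℝ) (g : Ed d → ℝ) (C a t : ℝ) (x : Ed d) : ℝ :=
  max (g x - C * (t - a) - u t x) 0 ^ 3

section Excess
variable {a b : ℝ} {β : ℝ → ℝ} {u : ℝ → Ed d → ℝ} {g : Ed d → ℝ} {ρ C a' : ℝ}

lemma excess_eq_zero (hu : Sol a b β u) (hg : ∀ x, 0 < g x → ‖x‖ ≤ ρ) (hC : 0 ≤ C)
    {t : ℝ} (ht : t ∈ Icc a b) (hat : a' ≤ t) {x : Ed d} (hx : ρ < ‖x‖) :
    excess u g C a' t x = 0 := by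
  have h1 : g x ≤ 0 := not_lt.1 fun h => absurd (hg x h) (not_le.2 hx)
  have h2 := hu.pos t ht x
  have h3 : 0 ≤ C * (t - a') := mul_nonneg hC (by linarith)
  unfold excess
  rw [max_eq_right (by linarith)]
  simp

lemma contDiff_excess (hu : Sol a b β u) (hg2 : ContDiff ℝ 2 g) {t : ℝ} (ht : t ∈ Icc a b) :
    ContDiff ℝ 2 (excess u g C a' t) :=
  contDiff_cube.comp ((hg2.sub contDiff_const).sub (hu.contDiff_x t ht))

lemma hasCompactSupport_excess (hu : Sol a b β u) (hg : ∀ x, 0 < g x → ‖x‖ ≤ ρ) (hC : 0 ≤ C)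
    {t : ℝ} (ht : t ∈ Icc a b) (hat : a' ≤ t) : HasCompactSupport (excess u g C a' t) := by
  refine HasCompactSupport.intro (isCompact_closedBall (0 : Ed d) ρ) fun x hx => ?_
  exact excess_eq_zero hu hg hC ht hat (by simpa using hx)

lemma integrable_excess (hu : Sol a b β u) (hg2 : ContDiff ℝ 2 g) (hg : ∀ x, 0 < g x → ‖x‖ ≤ ρ)
    (hC : 0 ≤ C) {t : ℝ} (ht : t ∈ Icc a b) (hat : a' ≤ t) : Integrable (excess u g C a' t) :=
  (contDiff_excess hu hg2 ht).continuous.integrable_of_hasCompactSupport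
    (hasCompactSupport_excess hu hg hC ht hat)

lemma continuousOn_integral_excess (hu : Sol a b β u) (hg2 : ContDiff ℝ 2 g)
    (hg : ∀ x, 0 < g x → ‖x‖ ≤ ρ) (hC : 0 ≤ C) :
    ContinuousOn (fun t => ∫ x, excess u g C a' t x) (Icc a b ∩ Ici a') := by
  obtain ⟨M, hM⟩ := (isCompact_closedBall (0 : Ed d) ρ).exists_bound_of_continuousOn
    hg2.continuous.continuousOn
  intro s hs
  have hInt : Integrable ((Metric.closedBall (0 : Ed d) ρ).indicator fun _ => (max M 0) ^ 3) :=
    (integrable_indicator_iff Metric.isClosed_closedBall.measurableSet).2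
      (integrableOn_const (isCompact_closedBall _ _).measure_lt_top.ne)
  refine tendsto_integral_filter_of_dominated_convergence _ ?_ ?_ hInt
    (Eventually.of_forall fun x => ?_)
  · filter_upwards [self_mem_nhdsWithin] with t ht
    exact (integrable_excess hu hg2 hg hC ht.1 ht.2).aestronglyMeasurable
  · filter_upwards [self_mem_nhdsWithin] with t ht
    refine Eventually.of_forall fun x => ?_
    by_cases hx : ‖x‖ ≤ ρ
    · rw [indicator_of_mem (by simpa using hx), Real.norm_eq_abs]
      unfold excess
      rw [abs_of_nonneg (by positivity)]
      have h2 := hu.pos t ht.1 x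
      have h3 : 0 ≤ C * (t - a') := mul_nonneg hC (sub_nonneg.2 ht.2)
      have h4 := (le_abs_self _).trans (hM x (by simpa using hx))
      exact pow_le_pow_left₀ (le_max_right _ _) (max_le_max (by linarith) le_rfl) 3
    · rw [indicator_of_notMem (by simpa using hx),
        excess_eq_zero hu hg hC ht.1 ht.2 (not_le.1 hx)]
      simp
  · have h1 : Continuous fun t => excess u g C a' t x := by
      have := hu.continuous_t x
      unfold excess
      fun_prop
    exact h1.continuousWithinAt

/-- The integral of `excess` is nonincreasing to first order at a time with a one-sided Lipschitz
bound, provided `g - C t` is a subsolution where `g > 0`. -/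
lemma excess_dini (hu : Sol a b β u) (hβ : ∀ t ∈ Icc a b, 0 ≤ β t) (hg2 : ContDiff ℝ 2 g)
    {k : ℝ} (hρ : ρ < k)
    (hg : ∀ x, 0 < g x → ‖x‖ ≤ ρ) (hC : 0 ≤ C) {τ : ℝ} (hτ : τ ∈ Ico a b) (haτ : a' ≤ τ)
    (hsub : ∀ x, 0 < g x → -C ≤ β τ / 2 * (lap g x + fderiv ℝ g x x))
    (hgood : LowLip u k τ) {ε : ℝ} (hε : 0 < ε) :
    ∀ᶠ t in 𝓝[>] τ, (∫ x, excess u g C a' t x) - ∫ x, excess u g C a' τ x ≤ (t - τ) * ε := by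
  have hτ' : τ ∈ Icc a b := ⟨hτ.1, hτ.2.le⟩
  set w : Ed d → ℝ := fun x => g x - C * (τ - a') - u τ x with hw
  have hw2 : ContDiff ℝ 2 w := (hg2.sub contDiff_const).sub (hu.contDiff_x τ hτ')
  set G : Ed d → ℝ := fun x => 3 * max (w x) 0 ^ 2 * (-C - β τ / 2 * Lst (u τ) x) with hGdef
  have hnhds : ∀ᶠ t in 𝓝[>] τ, t ∈ Icc a b ∧ a' ≤ t ∧ τ < t ∧ t ≤ τ + 1 := by
    filter_upwards [Ioo_mem_nhdsGT (lt_min hτ.2 (lt_add_one τ))] with t ht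
    have := lt_min_iff.1 ht.2
    exact ⟨⟨hτ.1.trans ht.1.le, this.1.le⟩, haτ.trans ht.1.le, ht.1, this.2.le⟩
  have hGc : Continuous G := by
    have h1 := hw2.continuous
    have h2 := continuous_Lst (hu.contDiff_x τ hτ')
    fun_prop
  have hwneg : ∀ x, ρ < ‖x‖ → w x ≤ 0 := by
    intro x hx
    have h1 : g x ≤ 0 := not_lt.1 fun h => absurd (hg x h) (not_le.2 hx)
    have h2 := hu.pos τ hτ' x
    have h3 : 0 ≤ C * (τ - a') := mul_nonneg hC (by linarith)
    simp only [hw]; linarith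
  have hGs : ∀ x, ρ < ‖x‖ → G x = 0 := fun x hx => by
    simp [hGdef, max_eq_right (hwneg x hx)]
  have hGcs : HasCompactSupport G :=
    HasCompactSupport.intro (isCompact_closedBall (0 : Ed d) ρ) fun x hx => hGs x (by simpa using hx)
  obtain ⟨m, hm⟩ := hGcs.exists_bound_of_continuous hGc
  obtain ⟨M, hM⟩ := (isCompact_closedBall (0 : Ed d) ρ).exists_bound_of_continuousOn
    hw2.continuous.continuousOn
  obtain ⟨C₁, hC₁⟩ := hgood ρ hρ
  have hle : ∫ x, G x ≤ 0 := by
    have hpt : ∀ x, G x ≤ β τ / 2 * Lst (excess u g C a' τ) x := by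
      intro x
      have hk := kato_cube hw2 x
      have hb := hβ τ hτ'
      have hLw : Lst w x = (lap g x + fderiv ℝ g x x) - Lst (u τ) x + d * u τ x + d * w x := by
        have dg := differentiable_of_C2 hg2
        have du := differentiable_of_C2 (hu.contDiff_x τ hτ')
        have e1 : ∀ i, pd i w = fun y => pd i g y - pd i (u τ) y := fun i => funext fun y => by
          have h1 : pd i (fun y => (g y - C * (τ - a')) - u τ y) y
            = pd i (fun y => g y - C * (τ - a')) y - pd i (u τ) y :=
            pd_sub i ((dg y).sub_const _) (du y)
          have h2 : pd i (fun y => g y - C * (τ - a')) y = pd i g y := by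
            unfold pd; rw [fderiv_sub_const]
          rw [← h2]; exact h1
        have e2 : lap w x = lap g x - lap (u τ) x := by
          unfold lap
          rw [← Finset.sum_sub_distrib]
          refine Finset.sum_congr rfl fun i _ => ?_
          rw [e1 i]
          exact pd_sub i (differentiable_pd hg2 i x) (differentiable_pd (hu.contDiff_x τ hτ') i x)
        have e3 : fderiv ℝ w x x = fderiv ℝ g x x - fderiv ℝ (u τ) x x := by
          simp only [fderiv_eq_sum_pd _ x x, e1, mul_sub, Finset.sum_sub_distrib]
        simp only [Lst, e2, e3]; ring
      rcases le_or_gt (w x) 0 with hx | hx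
      · have : Lst (excess u g C a' τ) x = Lst (fun y => max (w y) 0 ^ 3) x := rfl
        have hk' := kato_cube hw2 x
        simp only [max_eq_right hx] at hk'
        norm_num at hk'
        simp only [hGdef, max_eq_right hx]
        norm_num
        rw [this]
        exact mul_nonneg (by linarith) hk'
      · have hgx : 0 < g x := by
          have h2 := hu.pos τ hτ' x
          have h3 : 0 ≤ C * (τ - a') := mul_nonneg hC (by linarith)
          simp only [hw] at hx; linarith
        have h1 := hsub x hgx
        have hu0 := hu.pos τ hτ' x
        rw [max_eq_left hx.le] at hk
        simp only [hGdef, max_eq_left hx.le]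
        have hd0 : (0 : ℝ) ≤ d := Nat.cast_nonneg d
        have h2 : -C - β τ / 2 * Lst (u τ) x ≤ β τ / 2 * (Lst w x - d * w x) := by
          rw [hLw]
          have : 0 ≤ β τ / 2 * (d * u τ x) := by positivity
          nlinarith
        have h3 : 3 * w x ^ 2 * (Lst w x - d * w x) ≤ Lst (fun y => max (w y) 0 ^ 3) x := by
          have : 0 ≤ d * w x ^ 3 := by positivity
          nlinarith
        calc 3 * w x ^ 2 * (-C - β τ / 2 * Lst (u τ) x)
            ≤ 3 * w x ^ 2 * (β τ / 2 * (Lst w x - d * w x)) :=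
              mul_le_mul_of_nonneg_left h2 (by positivity)
          _ = β τ / 2 * (3 * w x ^ 2 * (Lst w x - d * w x)) := by ring
          _ ≤ _ := mul_le_mul_of_nonneg_left h3 (by linarith)
    have h2 := contDiff_excess (C := C) (a' := a') hu hg2 hτ'
    have h3 := hasCompactSupport_excess hu hg hC hτ' haτ
    have h4 : HasCompactSupport (Lst (excess u g C a' τ)) := by
      refine HasCompactSupport.intro (K := tsupport (excess u g C a' τ)) h3 fun x hx => ?_
      have e1 : excess u g C a' τ =ᶠ[𝓝 x] fun _ => 0 := notMem_tsupport_iff_eventuallyEq.1 hx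
      have e2 : ∀ i, pd i (excess u g C a' τ) x = 0 := fun i =>
        image_eq_zero_of_notMem_tsupport fun h => hx (tsupport_pd_subset _ i h)
      have e3 : ∀ i, pd i (pd i (excess u g C a' τ)) x = 0 := fun i =>
        image_eq_zero_of_notMem_tsupport fun h =>
          hx (tsupport_pd_subset _ i (tsupport_pd_subset _ i h))
      simp [Lst, lap, fderiv_eq_sum_pd, e2, e3, e1.self_of_nhds]
    calc ∫ x, G x ≤ ∫ x, β τ / 2 * Lst (excess u g C a' τ) x :=
          integral_mono (hGc.integrable_of_hasCompactSupport hGcs)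
            (((continuous_Lst h2).integrable_of_hasCompactSupport h4).const_mul _) hpt
      _ = 0 := by rw [integral_const_mul, integral_Lst_eq_zero h2 h3, mul_zero]
  have key := upper_dini_integral (F := fun t => excess u g C a' t) (G := G) (τ := τ) (ρ := ρ)
    (K := 3 * (|M| + |C₁|) ^ 2 * |C₁|) (m := m)
    (hnhds.mono fun t ht => integrable_excess hu hg2 hg hC ht.1 ht.2.1)
    (integrable_excess hu hg2 hg hC hτ' haτ)
    (hnhds.mono fun t ht x hx => by
      rw [excess_eq_zero hu hg hC ht.1 ht.2.1 hx, excess_eq_zero hu hg hC hτ' haτ hx]) ?_ ?_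
    hm hε
  · filter_upwards [key, hnhds] with t h1 h2
    refine h1.trans ?_
    rw [mul_comm]
    exact mul_le_mul_of_nonneg_left (by linarith) (by linarith [h2.2.2.1])
  · filter_upwards [hC₁, hnhds] with t h1 ht x hx
    have hs : 0 < t - τ := by linarith [ht.2.2.1]
    have hs1 : t - τ ≤ 1 := by linarith [ht.2.2.2]
    have h2 := h1 x hx
    have h3 : w x ≤ |M| := (le_abs_self _).trans ((hM x (by simpa using hx)).trans (le_abs_self _))
    have h4 : g x - C * (t - a') - u t x ≤ w x + |C₁| * (t - τ) := by
      have : C₁ * (t - τ) ≤ |C₁| * (t - τ) := mul_le_mul_of_nonneg_right (le_abs_self _) hs.le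
      have : C * (τ - a') ≤ C * (t - a') := mul_le_mul_of_nonneg_left (by linarith) hC
      simp only [hw]; linarith
    change max (g x - C * (t - a') - u t x) 0 ^ 3 - max (w x) 0 ^ 3 ≤ _
    set A := max (w x) 0
    set B := max (g x - C * (t - a') - u t x) 0
    have hA0 : 0 ≤ A := le_max_right _ _
    have hB0 : 0 ≤ B := le_max_right _ _
    have hc0 : 0 ≤ |C₁| * (t - τ) := mul_nonneg (abs_nonneg _) hs.le
    have hBA : B ≤ A + |C₁| * (t - τ) :=
      max_le (h4.trans (add_le_add_left (le_max_left _ _) _)) (add_nonneg hA0 hc0)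
    have hAM : A ≤ |M| := max_le h3 (abs_nonneg _)
    have hN : A + |C₁| * (t - τ) ≤ |M| + |C₁| :=
      add_le_add hAM (mul_le_of_le_one_right (abs_nonneg _) hs1)
    have h5 : B ^ 3 ≤ (A + |C₁| * (t - τ)) ^ 3 := pow_le_pow_left₀ hB0 hBA 3
    have h6 : (A + |C₁| * (t - τ)) ^ 3 - A ^ 3
        ≤ 3 * (A + |C₁| * (t - τ)) ^ 2 * (|C₁| * (t - τ)) := by
      generalize |C₁| * (t - τ) = h at *
      nlinarith [mul_nonneg hA0 (sq_nonneg h), pow_nonneg hc0 3]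
    have h7 : 3 * (A + |C₁| * (t - τ)) ^ 2 * (|C₁| * (t - τ))
        ≤ 3 * (|M| + |C₁|) ^ 2 * (|C₁| * (t - τ)) := by
      have := pow_le_pow_left₀ (add_nonneg hA0 hc0) hN 2
      exact mul_le_mul_of_nonneg_right (by linarith) hc0
    rw [mul_assoc]
    linarith
  · intro x
    have h1 : HasDerivAt (fun t => g x - C * (t - a') - u t x) (-C - β τ / 2 * Lst (u τ) x) τ := by
      have h2 : HasDerivAt (fun t => g x - C * (t - a')) (-C) τ := by
        simpa using (((hasDerivAt_id τ).sub_const a').const_mul C).const_sub (g x)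
      exact h2.sub (hu.hasDerivAt hτ' x)
    exact (hasDerivAt_cube (w x)).comp τ h1

/-- Comparison on an interval of good times: a subsolution below `u` initially stays below. -/
lemma comparison (hu : Sol a b β u) (hβ : ∀ t ∈ Icc a b, 0 ≤ β t) (hg2 : ContDiff ℝ 2 g)
    {k : ℝ} (hρ : ρ < k) (hg : ∀ x, 0 < g x → ‖x‖ ≤ ρ) (hC : 0 ≤ C)
    {τ₁ τ₂ : ℝ} (h1 : a ≤ τ₁) (h2 : τ₂ ≤ b)
    (hgood : ∀ τ ∈ Ioo τ₁ τ₂, LowLip u k τ)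
    (hsub : ∀ t ∈ Icc a b, ∀ x, 0 < g x → -C ≤ β t / 2 * (lap g x + fderiv ℝ g x x))
    (hle : ∀ x, g x ≤ u τ₁ x) {t : ℝ} (ht : t ∈ Icc τ₁ τ₂) (x : Ed d) :
    g x - C * (t - τ₁) ≤ u t x := by
  rcases eq_or_lt_of_le ht.1 with rfl | hlt
  · simpa using hle x
  have hc := continuousOn_integral_excess (a' := τ₁) hu hg2 hg hC
  have hss : Icc τ₁ t ⊆ Icc a b ∩ Ici τ₁ := fun r hr =>
    ⟨⟨h1.trans hr.1, hr.2.trans (ht.2.trans h2)⟩, hr.1⟩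
  have hmono : ∀ r ∈ Ioo τ₁ t, (∫ x, excess u g C τ₁ t x) ≤ ∫ x, excess u g C τ₁ r x := by
    intro r hr
    have := sub_le_integral_of_dini (M := fun s => ∫ x, excess u g C τ₁ s x) (g := fun _ => 0)
      hr.2.le (hc.mono ((Icc_subset_Icc_left hr.1.le).trans hss)) ?_ (by simp)
    · simpa using this
    · intro s hs y hy
      have hs' : s ∈ Ioo τ₁ τ₂ := ⟨hr.1.trans_le hs.1, hs.2.trans_le ht.2⟩
      have hs2 : s ∈ Ico a b := ⟨h1.trans hs'.1.le, hs'.2.trans_le h2⟩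
      exact excess_dini hu hβ hg2 hρ hg hC hs2 hs'.1.le (hsub s ⟨hs2.1, hs2.2.le⟩) (hgood s hs') hy
  have h0 : (∫ x, excess u g C τ₁ τ₁ x) = 0 := by
    have : ∀ x, excess u g C τ₁ τ₁ x = 0 := fun x => by
      simp [excess, hle x]
    simp [this]
  have hle0 : (∫ x, excess u g C τ₁ t x) ≤ 0 := by
    have hcw : Tendsto (fun s => ∫ x, excess u g C τ₁ s x) (𝓝[>] τ₁) (𝓝 0) := by
      rw [← h0]
      exact (hc τ₁ (hss ⟨le_rfl, hlt.le⟩)).mono_left (nhdsWithin_le_of_mem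
        (mem_of_superset (Ioo_mem_nhdsGT hlt) fun r hr => hss ⟨hr.1.le, hr.2.le⟩))
    refine ge_of_tendsto hcw ?_
    filter_upwards [Ioo_mem_nhdsGT hlt] with r hr using hmono r hr
  have htb : t ∈ Icc a b := (hss ⟨hlt.le, le_rfl⟩).1
  have hnn : ∀ x, 0 ≤ excess u g C τ₁ t x := fun x => by unfold excess; positivity
  have hz := (integral_eq_zero_iff_of_nonneg hnn (integrable_excess hu hg2 hg hC htb hlt.le)).1
    (le_antisymm hle0 (integral_nonneg hnn))
  have hz' := (Continuous.ae_eq_iff_eq volume (contDiff_excess hu hg2 htb).continuous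
    continuous_const).1 hz
  have h5 : max (g x - C * (t - τ₁) - u t x) 0 ^ 3 = 0 := congrFun hz' x
  have h6 := pow_eq_zero_iff (three_ne_zero) |>.1 h5
  have := max_eq_right_iff.1 h6
  linarith

end Excess

/-! ### Every time is good: the Baire category argument -/

/-- Times in `[a, b]` at which `u`, the negative part of `∂ₜu`, the gradient and the negative part
of the Hessian are bounded by `n` on the ball of radius `k`. The second-order bound is stated as
the existence of touching paraboloids, which makes this a closed condition in time although only
`u` and `∂ₜu` are known to be continuous in time. -/
def bddTimes (u : ℝ → Ed d → ℝ) (a b k n : ℝ) : Set ℝ :=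
  {t | t ∈ Icc a b ∧ ∀ y, ‖y‖ ≤ k → u t y ≤ n ∧ -n ≤ deriv (fun s => u s y) t ∧
    ∃ l : Ed d →L[ℝ] ℝ, ‖l‖ ≤ n ∧ ∀ x, ‖x‖ ≤ k → u t y + l (x - y) - n * ‖x - y‖ ^ 2 ≤ u t x}

section Baire
variable {a b : ℝ} {β : ℝ → ℝ} {u : ℝ → Ed d → ℝ}

lemma isClosed_bddTimes (hu : Sol a b β u) (k n : ℝ) : IsClosed (bddTimes u a b k n) := by
  have hset : bddTimes u a b k n = Icc a b ∩ ⋂ (y : Ed d) (_ : ‖y‖ ≤ k),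
      ({t | u t y ≤ n} ∩ ({t | -n ≤ deriv (fun s => u s y) t} ∩
        {t | ∃ l : Ed d →L[ℝ] ℝ, ‖l‖ ≤ n ∧
          ∀ x, ‖x‖ ≤ k → u t y + l (x - y) - n * ‖x - y‖ ^ 2 ≤ u t x})) := by
    ext t
    simp only [bddTimes, mem_ofPred_eq, mem_inter_iff, mem_iInter]
  rw [hset]
  refine isClosed_Icc.inter (isClosed_biInter fun y _ => ?_)
  refine (isClosed_le (hu.continuous_t y) continuous_const).inter
    ((isClosed_le continuous_const ((hu.contDiff_t y).continuous_deriv (by norm_num))).inter ?_)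
  have hK : CompactSpace (Metric.closedBall (0 : Ed d →L[ℝ] ℝ) n) :=
    isCompact_iff_compactSpace.1 (isCompact_closedBall _ _)
  have hcl : IsClosed {z : ℝ × Metric.closedBall (0 : Ed d →L[ℝ] ℝ) n |
      ∀ x, ‖x‖ ≤ k → u z.1 y + z.2.1 (x - y) - n * ‖x - y‖ ^ 2 ≤ u z.1 x} := by
    simp only [ofPred_forall]
    refine isClosed_iInter fun x => isClosed_iInter fun _ => isClosed_le ?_ ?_
    · have h1 := (hu.continuous_t y).comp (continuous_fst
        (X := ℝ) (Y := Metric.closedBall (0 : Ed d →L[ℝ] ℝ) n))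
      have h2 : Continuous fun z : ℝ × Metric.closedBall (0 : Ed d →L[ℝ] ℝ) n => z.2.1 (x - y) := by
        fun_prop
      exact (h1.add h2).sub continuous_const
    · exact (hu.continuous_t x).comp continuous_fst
  convert isClosedMap_fst_of_compactSpace _ hcl using 1
  ext t
  simp only [mem_ofPred_eq, mem_image, Prod.exists, exists_and_right, exists_eq_right,
    Subtype.exists, Metric.mem_closedBall, dist_zero_right, exists_prop]

lemma exists_mem_bddTimes (hu : Sol a b β u) (k : ℝ) {t : ℝ} (ht : t ∈ Icc a b) :
    ∃ n : ℕ, t ∈ bddTimes u a b k n := by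
  have hC2 := hu.contDiff_x t ht
  have hf1 : ContDiff ℝ 1 (fderiv ℝ (u t)) := hC2.fderiv_right (by norm_num)
  have hcpt := isCompact_closedBall (0 : Ed d) k
  obtain ⟨M₁, h₁⟩ := hcpt.exists_bound_of_continuousOn hC2.continuous.continuousOn
  obtain ⟨M₂, h₂⟩ := hcpt.exists_bound_of_continuousOn
    (continuous_const.mul (continuous_Lst hC2) :
      Continuous fun y => β t / 2 * Lst (u t) y).continuousOn
  obtain ⟨M₃, h₃⟩ := hcpt.exists_bound_of_continuousOn hf1.continuous.continuousOn
  obtain ⟨M₄, h₄⟩ := hcpt.exists_bound_of_continuousOn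
    (hf1.continuous_fderiv (by norm_num)).continuousOn
  obtain ⟨n, hn⟩ := exists_nat_ge (max (max M₁ M₂) (max M₃ M₄))
  have hn1 : M₁ ≤ n := (le_max_left _ _).trans ((le_max_left _ _).trans hn)
  have hn2 : M₂ ≤ n := (le_max_right _ _).trans ((le_max_left _ _).trans hn)
  have hn3 : M₃ ≤ n := (le_max_left _ _).trans ((le_max_right _ _).trans hn)
  have hn4 : M₄ ≤ n := (le_max_right _ _).trans ((le_max_right _ _).trans hn)
  refine ⟨n, ht, fun y hy => ?_⟩
  have hy' : y ∈ Metric.closedBall (0 : Ed d) k := by simpa using hy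
  refine ⟨(le_abs_self _).trans ((h₁ y hy').trans hn1), ?_, fderiv ℝ (u t) y,
    (h₃ y hy').trans hn3, fun x hx => ?_⟩
  · rw [hu.eq t ht y]
    have : -M₂ ≤ β t / 2 * Lst (u t) y := (abs_le.1 (h₂ y hy')).1
    linarith
  · have hx' : x ∈ Metric.closedBall (0 : Ed d) k := by simpa using hx
    have hseg : segment ℝ y x ⊆ Metric.closedBall (0 : Ed d) k :=
      (convex_closedBall _ _).segment_subset hy' hx'
    have hlip : ∀ z ∈ segment ℝ y x, ‖fderiv ℝ (u t) z - fderiv ℝ (u t) y‖ ≤ n * ‖x - y‖ := by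
      intro z hz
      have h := (convex_closedBall (0 : Ed d) k).norm_image_sub_le_of_norm_fderiv_le (𝕜 := ℝ)
        (fun w _ => hf1.differentiable (by norm_num) w) (C := (n : ℝ))
        (fun w hw => (h₄ w hw).trans hn4) hy' (hseg hz)
      refine h.trans (mul_le_mul_of_nonneg_left ?_ (Nat.cast_nonneg n))
      obtain ⟨s, hs, rfl⟩ := (segment_eq_image_lineMap ℝ y x ▸ hz :
        z ∈ AffineMap.lineMap y x '' Icc (0 : ℝ) 1)
      rw [AffineMap.lineMap_apply, vsub_eq_sub, vadd_eq_add, add_sub_cancel_right, norm_smul,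
        Real.norm_eq_abs, abs_of_nonneg hs.1]
      exact mul_le_of_le_one_left (norm_nonneg _) hs.2
    have h := (convex_segment y x).norm_image_sub_le_of_norm_hasFDerivWithin_le' (𝕜 := ℝ)
      (fun z _ => ((hC2.differentiable (by norm_num) z).hasFDerivAt).hasFDerivWithinAt)
      hlip (left_mem_segment ℝ y x) (right_mem_segment ℝ y x)
    have h' := (abs_le.1 h).1
    nlinarith

/-- On an interval of good times starting at a time in `bddTimes`, `u` decreases at most linearly,
at a rate depending only on the bounds: compare with the touching paraboloid at each point. -/
lemma gap_bound (hu : Sol a b β u) (hβ : ∀ t ∈ Icc a b, 0 ≤ β t) (hβc : Continuous β)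
    {k ρ : ℝ} (hρ : ρ < k) {n : ℝ} (hn : 0 ≤ n) :
    ∃ C, ∀ τ₁ τ₂, τ₁ ∈ bddTimes u a b k n → τ₂ ≤ b → (∀ τ ∈ Ioo τ₁ τ₂, LowLip u k τ) →
      ∀ t ∈ Icc τ₁ τ₂, ∀ y, ‖y‖ ≤ ρ → u τ₁ y - C * (t - τ₁) ≤ u t y := by
  rcases lt_or_ge ρ 0 with hρ0 | hρ0
  · exact ⟨0, fun _ _ _ _ _ _ _ y hy => absurd ((norm_nonneg y).trans hy) (not_le.2 hρ0)⟩
  obtain ⟨Bm, hBm⟩ := isCompact_Icc.exists_bound_of_continuousOn (hβc.continuousOn (s := Icc a b))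
  set δ := (k - ρ) / 2 with hδ
  have hδ0 : 0 < δ := by rw [hδ]; linarith
  have hk0 : 0 ≤ k := hρ0.trans hρ.le
  -- `A` is so large that the paraboloid is nonpositive at distance at least `δ` from its centre
  set A := n + n / δ ^ 2 + n / δ with hA
  have hAn : n ≤ A := by
    have : 0 ≤ n / δ ^ 2 + n / δ := by positivity
    linarith
  have hA0 : 0 ≤ A := hn.trans hAn
  set C := |Bm| / 2 * (2 * A * d + n * k + 2 * A * δ * k) with hCdef
  have hC0 : 0 ≤ C := by positivity
  refine ⟨C, fun τ₁ τ₂ hτ₁ hτ₂ hgood t ht y hy => ?_⟩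
  obtain ⟨hτ₁', hall⟩ := hτ₁
  obtain ⟨hun, -, l, hl, hpar⟩ := hall y (hy.trans hρ.le)
  set g : Ed d → ℝ := fun x => u τ₁ y + l (x - y) - A * ‖x - y‖ ^ 2 with hg
  have hg2 : ContDiff ℝ 2 g := by
    have : ContDiff ℝ 2 fun x : Ed d => ‖x - y‖ ^ 2 := (contDiff_id.sub contDiff_const).norm_sq ℝ
    exact (contDiff_const.add (l.contDiff.comp (contDiff_id.sub contDiff_const))).sub
      (contDiff_const.mul this)
  have hfd : ∀ x v, fderiv ℝ g x v = l v - 2 * A * inner ℝ (x - y) v := by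
    intro x v
    have h1 : HasFDerivAt (fun x : Ed d => ‖x - y‖ ^ 2)
        ((2 : ℝ) • (innerSL ℝ (x - y)).comp (ContinuousLinearMap.id ℝ (Ed d))) x := by
      exact (((hasFDerivAt_id x).sub_const y).norm_sq).congr_fderiv (by ext v; simp)
    have h2 : HasFDerivAt (fun x : Ed d => u τ₁ y + l (x - y)) l x := by
      simpa using ((l.hasFDerivAt (x := x - y)).comp x ((hasFDerivAt_id x).sub_const y)).const_add
        (u τ₁ y)
    have h3 := (h2.sub (h1.const_mul A)).fderiv
    have h4 : fderiv ℝ g x = _ := h3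
    rw [h4]
    simp [inner_sub_left]
    ring
  have hpd : ∀ i, pd i g = fun x => l (EuclideanSpace.single i 1) - 2 * A * (x i - y i) := by
    intro i; funext x
    simp [pd, hfd, EuclideanSpace.inner_single_right]
  have hlap : ∀ x, lap g x = -(2 * A * d) := by
    intro x
    have : ∀ i : Fin d, pd i (pd i g) x = -(2 * A) := by
      intro i
      rw [hpd i]
      have h1 : HasFDerivAt (fun x : Ed d => l (EuclideanSpace.single i 1) - 2 * A * (x i - y i))
          (-((2 * A) • (EuclideanSpace.proj i : Ed d →L[ℝ] ℝ))) x :=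
        (((hasFDerivAt_coord i x).sub_const (y i)).const_mul (2 * A)).const_sub _
      simp [pd, h1.fderiv]
    simp [lap, this]; ring
  have hlb : ∀ v, |l v| ≤ n * ‖v‖ := fun v =>
    (l.le_opNorm v).trans (mul_le_mul_of_nonneg_right hl (norm_nonneg _))
  have hgpos : ∀ x, 0 < g x → ‖x - y‖ < δ := by
    intro x hx
    by_contra hge
    rw [not_lt] at hge
    set r := ‖x - y‖
    have h1 := (le_abs_self _).trans (hlb (x - y))
    have h2 : n ≤ n / δ ^ 2 * r ^ 2 := by
      rw [div_mul_eq_mul_div, le_div_iff₀ (by positivity)]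
      exact mul_le_mul_of_nonneg_left (pow_le_pow_left₀ hδ0.le hge 2) hn
    have h3 : n * r ≤ n / δ * r ^ 2 := by
      rw [div_mul_eq_mul_div, le_div_iff₀ hδ0, sq, ← mul_assoc]
      exact mul_le_mul_of_nonneg_left hge (mul_nonneg hn (norm_nonneg _))
    have h4 : 0 ≤ n * r ^ 2 := by positivity
    have h5 : g x = u τ₁ y + l (x - y) - A * r ^ 2 := rfl
    have h6 : A * r ^ 2 = n * r ^ 2 + n / δ ^ 2 * r ^ 2 + n / δ * r ^ 2 := by rw [hA]; ring
    linarith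
  have hnx : ∀ x, ‖x - y‖ < δ → ‖x‖ ≤ (k + ρ) / 2 := by
    intro x hx
    have := norm_le_norm_sub_add x y
    rw [hδ] at hx; linarith
  have hfin := comparison hu hβ hg2 (ρ := (k + ρ) / 2) (k := k) (by linarith)
    (fun x hx => hnx x (hgpos x hx)) hC0 hτ₁'.1 hτ₂ hgood ?_ ?_ ht y
  · simpa [hg] using hfin
  · intro s hs x hx
    have hxδ := hgpos x hx
    have hxk : ‖x‖ ≤ k := (hnx x hxδ).trans (by linarith)
    rw [hlap, hfd]
    have h1 : -(n * k) ≤ l x :=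
      (neg_le_neg (mul_le_mul_of_nonneg_left hxk hn)).trans (abs_le.1 (hlb x)).1
    have h2 : inner ℝ (x - y) x ≤ δ * k := (real_inner_le_norm _ _).trans
      (mul_le_mul hxδ.le hxk (norm_nonneg _) hδ0.le)
    have h3 : -(2 * A * d + n * k + 2 * A * δ * k)
        ≤ -(2 * A * d) + (l x - 2 * A * inner ℝ (x - y) x) := by nlinarith
    have hb0 := hβ s hs
    have hb1 : β s ≤ |Bm| := (le_abs_self _).trans ((hBm s hs).trans (le_abs_self _))
    have h4 : 0 ≤ 2 * A * d + n * k + 2 * A * δ * k := by positivity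
    calc -C ≤ β s / 2 * (-(2 * A * d + n * k + 2 * A * δ * k)) := by rw [hCdef]; nlinarith
      _ ≤ _ := mul_le_mul_of_nonneg_left h3 (by linarith)
  · intro x
    by_cases hx : ‖x‖ ≤ k
    · refine le_trans ?_ (hpar x hx)
      have := mul_le_mul_of_nonneg_right hAn (sq_nonneg ‖x - y‖)
      simp only [hg]; linarith
    · have h1 : g x ≤ 0 := by
        by_contra hcon
        exact hx ((hnx x (hgpos x (not_le.1 hcon))).trans (by linarith))
      exact h1.trans (hu.pos τ₁ hτ₁' x).le

/-- Propagation across a closed set `P` of bounded times and the gaps of its complement. -/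
lemma bound_through (hu : Sol a b β u) {k ρ n C : ℝ} (hρ : ρ < k) (hnC : n ≤ C) {P : Set ℝ}
    (hP : IsClosed P) {τ t : ℝ} (hτP : τ ∈ P) (hτt : τ ≤ t)
    (hPn : ∀ s ∈ P, s ∈ Icc τ t → s ∈ bddTimes u a b k n)
    (hgap : ∀ τ₁ τ₂, τ₁ ∈ P → τ ≤ τ₁ → τ₁ ≤ τ₂ → τ₂ ≤ t → (∀ s ∈ Ioo τ₁ τ₂, s ∉ P) →
      ∀ y, ‖y‖ ≤ ρ → u τ₁ y - C * (τ₂ - τ₁) ≤ u τ₂ y)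
    {y : Ed d} (hy : ‖y‖ ≤ ρ) : u τ y - C * (t - τ) ≤ u t y := by
  set v : ℝ → ℝ := fun s => u s y + C * s with hv
  have hvc : Continuous v := (hu.continuous_t y).add (continuous_const.mul continuous_id)
  suffices h : ∀ ε > 0, v τ - ε * (t - τ) ≤ v t by
    have h1 : v τ ≤ v t := by
      refine le_of_forall_pos_le_add fun ε hε => ?_
      have h2 := h (ε / (t - τ + 1)) (by have : 0 ≤ t - τ := sub_nonneg.2 hτt; positivity)
      have h3 : ε / (t - τ + 1) * (t - τ) ≤ ε := by
        rw [div_mul_eq_mul_div, div_le_iff₀ (by linarith)]; nlinarith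
      linarith
    simp only [hv] at h1; linarith
  intro ε hε
  set S := P ∩ Icc τ t ∩ {s | v τ - ε * (s - τ) ≤ v s} with hS
  have hScl : IsClosed S := (hP.inter isClosed_Icc).inter
    (isClosed_le (by fun_prop) hvc)
  have hSne : S.Nonempty := ⟨τ, ⟨hτP, le_rfl, hτt⟩, by simp⟩
  have hSb : BddAbove S := ⟨t, fun s hs => hs.1.2.2⟩
  set r := sSup S with hr
  have hrS : r ∈ S := hScl.csSup_mem hSne hSb
  obtain ⟨⟨hrP, hrI⟩, hrv⟩ := hrS
  have hrv' : v τ - ε * (r - τ) ≤ v r := hrv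
  have hmax : ∀ s ∈ P, r < s → s ≤ t → v s < v τ - ε * (s - τ) := by
    intro s hs hrs hst
    by_contra hcon
    have : s ∈ S := ⟨⟨hs, hrI.1.trans hrs.le, hst⟩, not_lt.1 hcon⟩
    exact absurd (le_csSup hSb this) (not_le.2 hrs)
  have hjump : ∀ s, r ≤ s → s ≤ t → (∀ z ∈ Ioo r s, z ∉ P) → v r ≤ v s := by
    intro s hrs hst hz
    have := hgap r s hrP hrI.1 hrs hst hz y hy
    simp only [hv]; linarith
  rcases (P ∩ Ioc r t).eq_empty_or_nonempty with he | hne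
  · have h1 := hjump t hrI.2 le_rfl fun z hz hzP =>
      (he ▸ (⟨hzP, hz.1, hz.2.le⟩ : z ∈ P ∩ Ioc r t) : z ∈ (∅ : Set ℝ))
    have : ε * (r - τ) ≤ ε * (t - τ) := mul_le_mul_of_nonneg_left (by linarith [hrI.2]) hε.le
    linarith
  · exfalso
    have hbb : BddBelow (P ∩ Ioc r t) := ⟨r, fun s hs => hs.2.1.le⟩
    set s₂ := sInf (P ∩ Ioc r t) with hs₂
    have hrs : r ≤ s₂ := le_csInf hne fun s hs => hs.2.1.le
    -- either `P` accumulates at `r` from the right, and `∂ₜu ≥ -n` at `r` is used, or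
    -- `(r, s₂)` is a gap of `P`
    rcases eq_or_lt_of_le hrs with heq | hlt
    · have hrb := hPn r hrP hrI
      have hder : HasDerivAt v (deriv (fun s => u s y) r + C) r := by
        have h1 := ((hu.contDiff_t y).differentiable (by norm_num) r).hasDerivAt
        exact (h1.add ((hasDerivAt_id r).const_mul C)).congr_deriv (by simp)
      have hd0 : -ε < deriv (fun s => u s y) r + C := by
        linarith [(hrb.2 y (hy.trans hρ.le)).2.1]
      have hev : ∀ᶠ s in 𝓝[>] r, -ε < slope v r s :=
        ((hasDerivAt_iff_tendsto_slope.1 hder).mono_left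
          (nhdsWithin_mono r fun z (hz : r < z) => hz.ne')).eventually_const_lt hd0
      obtain ⟨c, hc, hcs⟩ := mem_nhdsGT_iff_exists_Ioo_subset.1 hev
      obtain ⟨s, hs, hsc⟩ := exists_lt_of_csInf_lt hne (show sInf (P ∩ Ioc r t) < c by
        rw [← hs₂, ← heq]; exact hc)
      have h1 : -ε < slope v r s := hcs ⟨hs.2.1, hsc⟩
      have h2 := hmax s hs.1 hs.2.1 hs.2.2
      have h3 : 0 < s - r := sub_pos.2 hs.2.1
      rw [slope_def_field, lt_div_iff₀ h3] at h1
      linarith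
    · have hmem : s₂ ∈ closure (P ∩ Ioc r t) := csInf_mem_closure hne hbb
      have hs₂P : s₂ ∈ P := hP.closure_subset_iff.2 inter_subset_left hmem
      obtain ⟨s, hs⟩ := hne
      have hs₂t : s₂ ≤ t := (csInf_le hbb hs).trans hs.2.2
      have h1 := hjump s₂ hlt.le hs₂t fun z hz hzP =>
        absurd (csInf_le hbb ⟨hzP, hz.1, hz.2.le.trans hs₂t⟩) (not_le.2 hz.2)
      have h2 := hmax s₂ hs₂P hlt hs₂t
      have : ε * (r - τ) ≤ ε * (s₂ - τ) := mul_le_mul_of_nonneg_left (by linarith) hε.le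
      linarith

/-- Every time is good. Otherwise, by Baire, the closure `P` of the set of bad times meets
some open interval in a nonempty subset of one `bddTimes`; inside that interval the bounds at times of
`P` and across the gaps of `P` combine to show that its bad times are good. -/
theorem lowLip (hu : Sol a b β u) (hβ : ∀ t ∈ Icc a b, 0 ≤ β t) (hβc : Continuous β) (k : ℝ)
    {τ : ℝ} (hτ : τ ∈ Ico a b) : LowLip u k τ := by
  by_contra hbad
  set B := {τ | τ ∈ Ico a b ∧ ¬ LowLip u k τ} with hB
  set P := closure B with hPdef
  have hPI : P ⊆ Icc a b := closure_minimal (fun s hs => ⟨hs.1.1, hs.1.2.le⟩) isClosed_Icc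
  have hPne : Nonempty P := ⟨⟨τ, subset_closure ⟨hτ, hbad⟩⟩⟩
  have hPc : IsClosed P := isClosed_closure
  have : CompleteSpace P := hPc.completeSpace_coe
  obtain ⟨n, x₀, hx₀⟩ := nonempty_interior_of_iUnion_of_closed
    (f := fun n : ℕ => {x : P | x.1 ∈ bddTimes u a b k n})
    (fun n => (isClosed_bddTimes hu k n).preimage continuous_subtype_val)
    (by
      refine eq_univ_of_forall fun x => mem_iUnion.2 ?_
      exact exists_mem_bddTimes hu k (hPI x.2))
  rw [mem_interior_iff_mem_nhds, nhds_subtype_eq_comap, mem_comap] at hx₀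
  obtain ⟨U, hU, hUs⟩ := hx₀
  obtain ⟨lo, hi, hlohi, hsub⟩ := mem_nhds_iff_exists_Ioo_subset.1 hU
  obtain ⟨s, hs1, hs2⟩ := mem_closure_iff.1 (x₀.2 : x₀.1 ∈ closure B) (Ioo lo hi) isOpen_Ioo hlohi
  have hPn : ∀ r ∈ P, r ∈ Ioo lo hi → r ∈ bddTimes u a b k n := fun r hr hrI =>
    hUs (show (⟨r, hr⟩ : P) ∈ Subtype.val ⁻¹' U from hsub hrI)
  refine hs2.2 fun ρ hρ => ?_
  obtain ⟨C, hC⟩ := gap_bound hu hβ hβc hρ (Nat.cast_nonneg n)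
  refine ⟨max C n, ?_⟩
  filter_upwards [Ioo_mem_nhdsGT (lt_min hs1.2 hs2.1.2)] with t ht y hy
  have ht' := lt_min_iff.1 ht.2
  refine bound_through hu hρ (le_max_right C n) hPc (subset_closure hs2) ht.1.le
    (fun r hr hrI => hPn r hr ⟨hs1.1.trans_le hrI.1, hrI.2.trans_lt ht'.1⟩) ?_ hy
  intro τ₁ τ₂ h1 h2 h3 h4 hz z hz'
  have h5 := hC τ₁ τ₂ (hPn τ₁ h1 ⟨hs1.1.trans_le h2, (h3.trans h4).trans_lt ht'.1⟩)
    (h4.trans ht'.2.le) (fun r hr => by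
      by_contra hcon
      refine hz r hr (subset_closure ⟨⟨hs2.1.1.trans (h2.trans hr.1.le), ?_⟩, hcon⟩)
      exact (hr.2.trans_le h4).trans ht'.2) τ₂ ⟨h3, le_rfl⟩ z hz'
  have : C * (τ₂ - τ₁) ≤ max C n * (τ₂ - τ₁) :=
    mul_le_mul_of_nonneg_right (le_max_left _ _) (by linarith)
  linarith

end Baire

/-! ### The weak form of the equation -/

/-- Smooth cutoffs `χₙ(x) = χ(x / (n + 1))`; `L χₙ` is bounded uniformly in `n`. -/
lemma exists_cutoff (d : ℕ) : ∃ (χ : ℕ → Ed d → ℝ) (K : ℝ), (∀ n, ContDiff ℝ 2 (χ n)) ∧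
    (∀ n, HasCompactSupport (χ n)) ∧ (∀ n x, 0 ≤ χ n x) ∧ (∀ n x, χ n x ≤ 1) ∧
    (∀ R, ∀ᶠ n in atTop, ∀ x, ‖x‖ ≤ R → χ n x = 1) ∧ (∀ n x, |Lad (χ n) x| ≤ K) ∧
    ∀ x, Tendsto (fun n => Lad (χ n) x) atTop (𝓝 0) := by
  let B : ContDiffBump (0 : Ed d) := ⟨1, 2, by norm_num, by norm_num⟩
  have hB2 : ContDiff ℝ 2 B := B.contDiff
  have hBs : HasCompactSupport B := B.hasCompactSupport
  obtain ⟨K₁, hK₁⟩ := (hasCompactSupport_lap hBs).exists_bound_of_continuous (continuous_lap hB2)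
  have hBf : HasCompactSupport (fun x => fderiv ℝ B x x) := by
    refine HasCompactSupport.intro (K := tsupport B) hBs fun x hx => ?_
    rw [image_eq_zero_of_notMem_tsupport (fun h => hx (tsupport_fderiv_subset ℝ h))]
    simp
  obtain ⟨K₂, hK₂⟩ := hBf.exists_bound_of_continuous (continuous_fderiv_self hB2)
  let c : ℕ → ℝ := fun n => ((n : ℝ) + 1)⁻¹
  have hc0 : ∀ n, 0 < c n := fun n => by positivity
  have hc1 : ∀ n, c n ≤ 1 := fun n => inv_le_one_of_one_le₀ (by linarith [n.cast_nonneg (α := ℝ)])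
  have hlin : ∀ n, ContDiff ℝ 2 fun x : Ed d => c n • x := fun n => contDiff_const_smul (c n)
  have hpdc : ∀ n i (f : Ed d → ℝ), Differentiable ℝ f → ∀ x,
      pd i (fun x => f (c n • x)) x = c n * pd i f (c n • x) := by
    intro n i f hf x
    have h1 : HasFDerivAt (fun x : Ed d => c n • x) (c n • ContinuousLinearMap.id ℝ (Ed d)) x :=
      (hasFDerivAt_id x).const_smul (c n)
    have h2 := ((hf (c n • x)).hasFDerivAt.comp x h1).fderiv
    change fderiv ℝ (f ∘ fun x => c n • x) x _ = _
    rw [h2]; simp [pd]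
  have hLad : ∀ n x, Lad (fun x => B (c n • x)) x
      = c n ^ 2 * lap B (c n • x) - fderiv ℝ B (c n • x) (c n • x) := by
    intro n x
    have e1 : ∀ i, pd i (fun x => B (c n • x)) = fun x => c n * pd i B (c n • x) := fun i =>
      funext fun x => hpdc n i B (differentiable_of_C2 hB2) x
    have e2 : ∀ i, pd i (pd i (fun x => B (c n • x))) x = c n ^ 2 * pd i (pd i B) (c n • x) := by
      intro i
      rw [e1 i]
      have h3 : pd i (fun x => c n * pd i B (c n • x)) x = c n * pd i (fun x => pd i B (c n • x)) x := by
        have h4 : DifferentiableAt ℝ (fun x => pd i B (c n • x)) x :=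
          ((differentiable_pd hB2 i).comp ((hlin n).differentiable (by norm_num))) x
        unfold pd at h4 ⊢
        rw [fderiv_const_mul h4]; simp
      rw [h3, hpdc n i _ (differentiable_pd hB2 i)]; ring
    unfold Lad lap
    simp only [e2, ← Finset.mul_sum]
    congr 1
    rw [fderiv_eq_sum_pd, fderiv_eq_sum_pd]
    refine Finset.sum_congr rfl fun i _ => ?_
    rw [e1 i]; simp; ring
  have hone : ∀ R, ∀ᶠ n in atTop, ∀ x : Ed d, ‖x‖ ≤ R → B (c n • x) = 1 := by
    intro R
    filter_upwards [eventually_ge_atTop ⌈R⌉₊] with n hn x hx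
    refine B.one_of_mem_closedBall ?_
    rw [mem_closedBall_zero_iff, norm_smul, Real.norm_eq_abs, abs_of_pos (hc0 n)]
    have : R ≤ n := (Nat.le_ceil R).trans (by exact_mod_cast hn)
    change ((n : ℝ) + 1)⁻¹ * ‖x‖ ≤ 1
    rw [inv_mul_le_iff₀ (by positivity)]
    linarith
  refine ⟨fun n x => B (c n • x), K₁ + K₂, fun n => hB2.comp (hlin n), fun n => ?_,
    fun n x => B.nonneg, fun n x => B.le_one, hone, fun n x => ?_, fun x => ?_⟩
  · exact hBs.comp_homeomorph (Homeomorph.smulOfNeZero (c n) (hc0 n).ne')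
  · rw [hLad]
    refine (abs_sub _ _).trans (add_le_add ?_ (hK₂ _))
    rw [abs_mul, abs_of_nonneg (by positivity)]
    exact (mul_le_of_le_one_left (abs_nonneg _) (pow_le_one₀ (hc0 n).le (hc1 n))).trans (hK₁ _)
  · refine tendsto_const_nhds.congr' ?_
    filter_upwards [hone (‖x‖ + 1)] with n hn
    have hev : (fun x => B (c n • x)) =ᶠ[𝓝 x] fun _ => 1 := by
      filter_upwards [Metric.ball_mem_nhds x one_pos] with z hz
      refine hn z ?_
      have h1 := norm_le_norm_add_norm_sub x z
      rw [Metric.mem_ball, dist_eq_norm, norm_sub_rev] at hz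
      rw [norm_sub_rev] at h1
      have := norm_le_norm_sub_add z x
      rw [norm_sub_rev] at this
      linarith
    have e1 : ∀ i, pd i (fun x => B (c n • x)) =ᶠ[𝓝 x] fun _ => 0 := fun i => by
      filter_upwards [hev.eventuallyEq_nhds] with z hz
      simp [pd, hz.fderiv_eq]
    have e2 : ∀ i, pd i (pd i (fun x => B (c n • x))) x = 0 := fun i => by
      have h1 : fderiv ℝ (pd i (fun x => B (c n • x))) x = 0 := by
        rw [(e1 i).fderiv_eq]; simp
      change fderiv ℝ (pd i (fun x => B (c n • x))) x _ = 0
      rw [h1]; simp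
    simp [Lad, lap, e2, hev.fderiv_eq]

section Weak
variable {a b : ℝ} {β : ℝ → ℝ} {u : ℝ → Ed d → ℝ}

lemma Sol.continuousOn_integral_mul (hu : Sol a b β u) {m : Ed d → ℝ} (hm : Continuous m) {C : ℝ}
    (hC : ∀ x, |m x| ≤ C) : ContinuousOn (fun t => ∫ x, m x * u t x) (Icc a b) := by
  refine VP.continuousOn_integral_mul (fun t ht x => (hu.pos t ht x).le)
    (fun t ht => hu.integrable ht) ?_ (fun x => (hu.continuous_t x).continuousOn) hm hC
  exact continuousOn_const.congr fun t ht => hu.mass_one t ht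

/-- The rate of change of `∫ η u` predicted by the equation. -/
noncomputable def rate (β : ℝ → ℝ) (u : ℝ → Ed d → ℝ) (η : Ed d → ℝ) (t : ℝ) : ℝ :=
  β t / 2 * ∫ x, Lad η x * u t x

lemma continuousOn_rate (hu : Sol a b β u) (hβc : Continuous β) {η : Ed d → ℝ}
    (hη : ContDiff ℝ 2 η) (hs : HasCompactSupport η) : ContinuousOn (rate β u η) (Icc a b) := by
  obtain ⟨C, hC⟩ := (hasCompactSupport_Lad hs).exists_bound_of_continuous (continuous_Lad hη)
  exact (hβc.div_const 2).continuousOn.mul (hu.continuousOn_integral_mul (continuous_Lad hη) hC)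

/-- Nonnegative test functions: `∫ η u` grows at least as predicted. -/
lemma weak_ineq (hu : Sol a b β u) (hβ : ∀ t ∈ Icc a b, 0 ≤ β t) (hβc : Continuous β)
    {η : Ed d → ℝ} (hη : ContDiff ℝ 2 η) (hs : HasCompactSupport η) (h0 : ∀ x, 0 ≤ η x)
    {s t : ℝ} (has : a ≤ s) (hst : s ≤ t) (htb : t ≤ b) :
    ∫ r in s..t, rate β u η r ≤ (∫ x, η x * u t x) - ∫ x, η x * u s x := by
  obtain ⟨Mη, hMη⟩ := hs.exists_bound_of_continuous hη.continuous
  obtain ⟨ρ, hρ⟩ := hs.isCompact.isBounded.subset_closedBall (0 : Ed d)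
  have hout : ∀ x, ρ < ‖x‖ → η x = 0 := fun x hx =>
    image_eq_zero_of_notMem_tsupport fun h => absurd (hρ h) (by simpa using hx)
  have hsub : Icc s t ⊆ Icc a b := Icc_subset_Icc has htb
  have hInt : ∀ r ∈ Icc a b, Integrable (fun x => η x * u r x) := fun r hr =>
    (hu.integrable hr).bdd_mul hη.continuous.aestronglyMeasurable (Eventually.of_forall hMη)
  have h := sub_le_integral_of_dini (M := fun r => ∫ x, -(η x * u r x))
    (g := fun r => -rate β u η r) hst ?_ ?_ ?_
  · rw [intervalIntegral.integral_neg, integral_neg, integral_neg] at h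
    linarith
  · simp only [integral_neg]
    exact ((hu.continuousOn_integral_mul hη.continuous hMη).mono hsub).neg
  · intro τ hτ y hy
    have hτ' : τ ∈ Ico a b := ⟨has.trans hτ.1, hτ.2.trans_le htb⟩
    have hτ'' : τ ∈ Icc a b := ⟨hτ'.1, hτ'.2.le⟩
    obtain ⟨C, hC⟩ := lowLip hu hβ hβc (ρ + 1) hτ' ρ (lt_add_one ρ)
    have hC2 := hu.contDiff_x τ hτ''
    have hGc : Continuous fun x => -(η x * (β τ / 2 * Lst (u τ) x)) :=
      (hη.continuous.mul (continuous_const.mul (continuous_Lst hC2))).neg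
    have hGs : HasCompactSupport fun x => -(η x * (β τ / 2 * Lst (u τ) x)) := by
      refine HasCompactSupport.intro (K := tsupport η) hs fun x hx => ?_
      rw [image_eq_zero_of_notMem_tsupport hx]; simp
    obtain ⟨m, hm⟩ := hGs.exists_bound_of_continuous hGc
    have hGI : ∫ x, -(η x * (β τ / 2 * Lst (u τ) x)) = -rate β u η τ := by
      have e : ∀ x, η x * (β τ / 2 * Lst (u τ) x) = β τ / 2 * (η x * Lst (u τ) x) := fun x => by
        ring
      rw [integral_neg]
      simp only [e]
      rw [integral_const_mul, integral_mul_Lst hC2 hη hs, rate]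
      simp only [mul_comm]
    have hnhds : ∀ᶠ t in 𝓝[>] τ, t ∈ Icc a b ∧ τ < t := by
      filter_upwards [Ioo_mem_nhdsGT hτ'.2] with t ht
      exact ⟨⟨hτ'.1.trans ht.1.le, ht.2.le⟩, ht.1⟩
    have key := upper_dini_integral (F := fun t x => -(η x * u t x))
      (G := fun x => -(η x * (β τ / 2 * Lst (u τ) x))) (τ := τ) (ρ := ρ) (K := Mη * |C|) (m := m)
      (hnhds.mono fun r hr => (hInt r hr.1).neg) (hInt τ hτ'').neg
      (Eventually.of_forall fun r x hx => by simp [hout x hx]) ?_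
      (fun x => ((hu.hasDerivAt hτ'' x).const_mul (η x)).neg) hm
      (ε := y + rate β u η τ) (by linarith)
    · filter_upwards [key] with r hr
      rw [hGI] at hr
      refine hr.trans_eq ?_
      ring
    · filter_upwards [hC, hnhds] with r hr hr2 x hx
      have h1 := hr x hx
      have h2 : 0 < r - τ := sub_pos.2 hr2.2
      have h3 : u τ x - u r x ≤ |C| * (r - τ) := by
        have := mul_le_mul_of_nonneg_right (le_abs_self C) h2.le
        linarith
      have h4 : η x ≤ Mη := (le_abs_self _).trans (hMη x)
      have h5 : η x * (u τ x - u r x) ≤ η x * (|C| * (r - τ)) :=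
        mul_le_mul_of_nonneg_left h3 (h0 x)
      have h6 : η x * (|C| * (r - τ)) ≤ Mη * (|C| * (r - τ)) :=
        mul_le_mul_of_nonneg_right h4 (by positivity)
      linarith
  · exact ((continuousOn_rate hu hβc hη hs).mono hsub).neg.integrableOn_Icc

/-- The defect in the weak equation on `[s, t]`. -/
noncomputable def defect (β : ℝ → ℝ) (u : ℝ → Ed d → ℝ) (s t : ℝ) (η : Ed d → ℝ) : ℝ :=
  (∫ x, η x * u t x) - (∫ x, η x * u s x) - ∫ r in s..t, rate β u η r

lemma Lad_lin {f g : Ed d → ℝ} (hf : ContDiff ℝ 2 f) (hg : ContDiff ℝ 2 g) (c e : ℝ) (x : Ed d) :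
    Lad (fun y => c * f y + e * g y) x = c * Lad f x + e * Lad g x := by
  have df := differentiable_of_C2 hf
  have dg := differentiable_of_C2 hg
  have hpd : ∀ (f g : Ed d → ℝ), Differentiable ℝ f → Differentiable ℝ g → ∀ i,
      pd i (fun y => c * f y + e * g y) = fun y => c * pd i f y + e * pd i g y := by
    intro f g df dg i; funext y
    unfold pd
    rw [fderiv_fun_add ((df y).const_mul c) ((dg y).const_mul e), fderiv_const_mul (df y),
      fderiv_const_mul (dg y)]
    simp
  have h1 := hpd f g df dg
  have h2 : ∀ i, pd i (pd i (fun y => c * f y + e * g y)) x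
      = c * pd i (pd i f) x + e * pd i (pd i g) x := fun i => by
    rw [h1 i, hpd _ _ (differentiable_pd hf i) (differentiable_pd hg i) i]
  unfold Lad lap
  rw [fderiv_eq_sum_pd, fderiv_eq_sum_pd f, fderiv_eq_sum_pd g]
  simp only [h2]
  simp only [h1, Finset.sum_add_distrib, ← Finset.mul_sum, mul_add, mul_left_comm (_ : ℝ) c,
    mul_left_comm (_ : ℝ) e]
  ring

lemma defect_lin (hu : Sol a b β u) (hβc : Continuous β) {f g : Ed d → ℝ}
    (hf : ContDiff ℝ 2 f) (hfs : HasCompactSupport f) (hg : ContDiff ℝ 2 g)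
    (hgs : HasCompactSupport g) (c e : ℝ) {s t : ℝ} (has : a ≤ s) (hst : s ≤ t) (htb : t ≤ b) :
    defect β u s t (fun y => c * f y + e * g y) = c * defect β u s t f + e * defect β u s t g := by
  have hmul : ∀ {m m' : Ed d → ℝ}, Continuous m → HasCompactSupport m → Continuous m' →
      HasCompactSupport m' → ∀ r ∈ Icc a b, ∫ x, (c * m x + e * m' x) * u r x
        = c * (∫ x, m x * u r x) + e * ∫ x, m' x * u r x := by
    intro m m' hm hms hm' hms' r hr
    obtain ⟨C, hC⟩ := hms.exists_bound_of_continuous hm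
    obtain ⟨C', hC'⟩ := hms'.exists_bound_of_continuous hm'
    have i1 : Integrable fun x => m x * u r x :=
      (hu.integrable hr).bdd_mul hm.aestronglyMeasurable (Eventually.of_forall hC)
    have i2 : Integrable fun x => m' x * u r x :=
      (hu.integrable hr).bdd_mul hm'.aestronglyMeasurable (Eventually.of_forall hC')
    simp only [add_mul, mul_assoc]
    rw [integral_add (i1.const_mul c) (i2.const_mul e), integral_const_mul, integral_const_mul]
  have hr : ∀ r ∈ Icc a b, rate β u (fun y => c * f y + e * g y) r
      = c * rate β u f r + e * rate β u g r := by
    intro r hr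
    unfold rate
    simp only [Lad_lin hf hg]
    rw [hmul (continuous_Lad hf) (hasCompactSupport_Lad hfs) (continuous_Lad hg)
      (hasCompactSupport_Lad hgs) r hr]
    ring
  have hsub : Icc s t ⊆ Icc a b := Icc_subset_Icc has htb
  have j : ∀ {f : Ed d → ℝ}, ContDiff ℝ 2 f → HasCompactSupport f →
      IntervalIntegrable (rate β u f) volume s t := fun hf hfs =>
    ((continuousOn_rate hu hβc hf hfs).mono hsub).intervalIntegrable_of_Icc hst
  unfold defect
  rw [intervalIntegral.integral_congr (g := fun r => c * rate β u f r + e * rate β u g r)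
    (fun r hr' => hr r (hsub (uIcc_of_le hst ▸ hr'))),
    intervalIntegral.integral_add ((j hf hfs).const_mul c) ((j hg hgs).const_mul e),
    intervalIntegral.integral_const_mul, intervalIntegral.integral_const_mul,
    hmul hf.continuous hfs hg.continuous hgs t ⟨has.trans hst, htb⟩,
    hmul hf.continuous hfs hg.continuous hgs s ⟨has, hst.trans htb⟩]
  ring

/-- Conservation of mass turns the one-sided inequality into the weak equation: the defect of the
cutoffs tends to zero, and `M χₙ ± η ≥ 0` for large `n`. -/
lemma defect_eq_zero (hu : Sol a b β u) (hβ : ∀ t ∈ Icc a b, 0 ≤ β t) (hβc : Continuous β)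
    {η : Ed d → ℝ} (hη : ContDiff ℝ 2 η) (hs : HasCompactSupport η)
    {s t : ℝ} (has : a ≤ s) (hst : s ≤ t) (htb : t ≤ b) : defect β u s t η = 0 := by
  obtain ⟨χ, K, hχ2, hχs, hχ0, hχ1, hχR, hχK, hχL⟩ := exists_cutoff d
  obtain ⟨Mη, hMη⟩ := hs.exists_bound_of_continuous hη.continuous
  obtain ⟨ρ, hρ⟩ := hs.isCompact.isBounded.subset_closedBall (0 : Ed d)
  have hsub : Icc s t ⊆ Icc a b := Icc_subset_Icc has htb
  have hout : ∀ x, ρ < ‖x‖ → η x = 0 := fun x hx =>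
    image_eq_zero_of_notMem_tsupport fun h => absurd (hρ h) (by simpa using hx)
  have hM0 : 0 ≤ Mη := (norm_nonneg _).trans (hMη 0)
  have hnn : ∀ {f : Ed d → ℝ}, ContDiff ℝ 2 f → HasCompactSupport f → (∀ x, 0 ≤ f x) →
      0 ≤ defect β u s t f := fun hf hfs h0 =>
    sub_nonneg.2 (weak_ineq hu hβ hβc hf hfs h0 has hst htb)
  have hmass : ∀ r ∈ Icc a b, Tendsto (fun n => ∫ x, χ n x * u r x) atTop (𝓝 1) := by
    intro r hr
    rw [← hu.mass_one r hr]
    refine tendsto_integral_of_dominated_convergence (u r)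
      (fun n => ((hχ2 n).continuous.mul (hu.contDiff_x r hr).continuous).aestronglyMeasurable)
      (hu.integrable hr) (fun n => Eventually.of_forall fun x => ?_)
      (Eventually.of_forall fun x => ?_)
    · rw [norm_mul, Real.norm_eq_abs, Real.norm_eq_abs, abs_of_nonneg (hχ0 n x),
        abs_of_pos (hu.pos r hr x)]
      exact mul_le_of_le_one_left (hu.pos r hr x).le (hχ1 n x)
    · refine tendsto_const_nhds.congr' ?_
      filter_upwards [hχR ‖x‖] with n hn
      rw [hn x le_rfl, one_mul]
  have hLu : ∀ r ∈ Icc a b, ∀ n x, ‖Lad (χ n) x * u r x‖ ≤ K * u r x := by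
    intro r hr n x
    rw [norm_mul, Real.norm_eq_abs, Real.norm_eq_abs, abs_of_pos (hu.pos r hr x)]
    exact mul_le_mul_of_nonneg_right (hχK n x) (hu.pos r hr x).le
  have hrate : ∀ r ∈ Icc a b, Tendsto (fun n => rate β u (χ n) r) atTop (𝓝 0) := by
    intro r hr
    have h1 : Tendsto (fun n => ∫ x, Lad (χ n) x * u r x) atTop (𝓝 (∫ _ : Ed d, (0 : ℝ))) := by
      refine tendsto_integral_of_dominated_convergence (fun x => K * u r x)
        (fun n => ((continuous_Lad (hχ2 n)).mul
          (hu.contDiff_x r hr).continuous).aestronglyMeasurable)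
        ((hu.integrable hr).const_mul K) (fun n => Eventually.of_forall (hLu r hr n))
        (Eventually.of_forall fun x => ?_)
      simpa using (hχL x).mul_const (u r x)
    simpa [rate] using h1.const_mul (β r / 2)
  have hrint : Tendsto (fun n => ∫ r in s..t, rate β u (χ n) r) atTop (𝓝 0) := by
    have h1 : Tendsto (fun n => ∫ r in s..t, rate β u (χ n) r) atTop (𝓝 (∫ _ in s..t, (0 : ℝ))) := by
      refine intervalIntegral.tendsto_integral_filter_of_dominated_convergence
        (fun r => |β r / 2| * K) (Eventually.of_forall fun n => ?_) (Eventually.of_forall fun n =>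
          Eventually.of_forall fun r hr => ?_)
        ((hβc.div_const 2).abs.mul continuous_const).continuousOn.intervalIntegrable
        (Eventually.of_forall fun r hr => ?_)
      · rw [uIoc_of_le hst]
        exact (((continuousOn_rate hu hβc (hχ2 n) (hχs n)).mono hsub).mono
          Ioc_subset_Icc_self).aestronglyMeasurable measurableSet_Ioc
      · rw [uIoc_of_le hst] at hr
        have hr' := hsub (Ioc_subset_Icc_self hr)
        rw [rate, norm_mul, Real.norm_eq_abs]
        refine mul_le_mul_of_nonneg_left ?_ (abs_nonneg _)
        have := norm_integral_le_of_norm_le ((hu.integrable hr').const_mul K)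
          (Eventually.of_forall (hLu r hr' n))
        rwa [integral_const_mul, hu.mass_one r hr', mul_one] at this
      · rw [uIoc_of_le hst] at hr
        exact hrate r (hsub (Ioc_subset_Icc_self hr))
    simpa using h1
  have hdef : Tendsto (fun n => Mη * defect β u s t (χ n)) atTop (𝓝 0) := by
    have := (((hmass t ⟨has.trans hst, htb⟩).sub (hmass s ⟨has, hst.trans htb⟩)).sub hrint).const_mul
      Mη
    simpa [defect] using this
  have hbd : ∀ᶠ n in atTop, |defect β u s t η| ≤ Mη * defect β u s t (χ n) := by
    filter_upwards [hχR ρ] with n hn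
    have hside : ∀ e : ℝ, |e| = 1 → 0 ≤ Mη * defect β u s t (χ n) + e * defect β u s t η := by
      intro e he
      rw [← defect_lin hu hβc (hχ2 n) (hχs n) hη hs Mη e has hst htb]
      refine hnn ((contDiff_const.mul (hχ2 n)).add (contDiff_const.mul hη))
        ((hχs n).mul_left.add hs.mul_left) fun x => ?_
      rcases le_or_gt ‖x‖ ρ with hx | hx
      · rw [hn x hx]
        have h1 : |e * η x| ≤ Mη := by rw [abs_mul, he, one_mul]; exact hMη x
        linarith [(abs_le.1 h1).1]
      · rw [hout x hx]
        have := mul_nonneg hM0 (hχ0 n x)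
        linarith
    have h1 := hside 1 (by simp)
    have h2 := hside (-1) (by simp)
    exact abs_le.2 ⟨by linarith, by linarith⟩
  exact abs_nonpos_iff.1 (ge_of_tendsto hdef hbd)

lemma hasDerivWithinAt_of_nonneg (hu : Sol a b β u) (hβ : ∀ t ∈ Icc a b, 0 ≤ β t)
    (hβc : Continuous β) {η : Ed d → ℝ} (hη : ContDiff ℝ 2 η) (hs : HasCompactSupport η)
    {s : ℝ} (hsI : s ∈ Icc a b) :
    HasDerivWithinAt (fun t => ∫ x, η x * u t x) (rate β u η s) (Icc a b) s := by
  have hab : a ≤ b := hsI.1.trans hsI.2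
  have hcr := continuousOn_rate hu hβc hη hs
  set G := IccExtend hab ((Icc a b).domRestrict (rate β u η)) with hG
  have hGc : Continuous G := (continuousOn_iff_continuous_domRestrict.1 hcr).Icc_extend'
  have hGe : ∀ r ∈ Icc a b, G r = rate β u η r := fun r hr => by
    rw [hG, IccExtend_of_mem _ _ hr]; rfl
  have h1 : HasDerivAt (fun t => (∫ x, η x * u a x) + ∫ r in a..t, G r) (G s) s :=
    (intervalIntegral.integral_hasDerivAt_right (hGc.intervalIntegrable _ _)
      (hGc.stronglyMeasurableAtFilter _ _) hGc.continuousAt).const_add _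
  rw [← hGe s hsI]
  have hf : ∀ t ∈ Icc a b, (∫ x, η x * u t x) = (∫ x, η x * u a x) + ∫ r in a..t, G r := by
    intro t ht
    have h2 := defect_eq_zero hu hβ hβc hη hs le_rfl ht.1 ht.2
    rw [intervalIntegral.integral_congr (g := rate β u η) fun r hr =>
      hGe r (Icc_subset_Icc_right ht.2 (uIcc_of_le ht.1 ▸ hr))]
    unfold defect at h2
    linarith
  exact h1.hasDerivWithinAt.congr hf (hf s hsI)

lemma Sol.reverse (hu : Sol a b β u) :
    Sol a b (fun t => -β (a + b - t)) (fun t => u (a + b - t)) := by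
  have hm : ∀ t ∈ Icc a b, a + b - t ∈ Icc a b := fun t ht =>
    ⟨by linarith [ht.2], by linarith [ht.1]⟩
  refine ⟨fun t ht => hu.pos _ (hm t ht), fun x => ?_, fun t ht => hu.contDiff_x _ (hm t ht),
    fun t ht => hu.mass_one _ (hm t ht), fun t ht x => ?_⟩
  · exact (hu.contDiff_t x).comp (contDiff_const.sub contDiff_id)
  · have h1 := (hu.hasDerivAt (hm t ht) x).comp t ((hasDerivAt_id t).const_sub (a + b))
    refine (HasDerivAt.deriv h1).trans ?_
    ring

/-- The weak equation, in differential form, on an interval where `β` has a constant sign. Negative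
`β` is handled by reversing time. -/
theorem hasDerivWithinAt_integral (hu : Sol a b β u)
    (hβ : (∀ t ∈ Icc a b, 0 ≤ β t) ∨ ∀ t ∈ Icc a b, β t ≤ 0)
    (hβc : Continuous β) {η : Ed d → ℝ} (hη : ContDiff ℝ 2 η) (hs : HasCompactSupport η)
    {s : ℝ} (hsI : s ∈ Icc a b) :
    HasDerivWithinAt (fun t => ∫ x, η x * u t x) (β s / 2 * ∫ x, η x * Lst (u s) x)
      (Icc a b) s := by
  have e : β s / 2 * ∫ x, η x * Lst (u s) x = rate β u η s := by
    rw [integral_mul_Lst (hu.contDiff_x s hsI) hη hs, rate]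
    simp only [mul_comm]
  rw [e]
  rcases hβ with hβ | hβ
  · exact hasDerivWithinAt_of_nonneg hu hβ hβc hη hs hsI
  · have hm : MapsTo (fun t => a + b - t) (Icc a b) (Icc a b) := fun t ht =>
      ⟨by linarith [ht.2], by linarith [ht.1]⟩
    have h1 := hasDerivWithinAt_of_nonneg hu.reverse (fun t ht => neg_nonneg.2 (hβ _ (hm ht)))
      (by fun_prop) hη hs (hm hsI)
    have h2 := h1.comp s (((hasDerivAt_id s).const_sub (a + b)).hasDerivWithinAt (s := Icc a b)) hm
    have h3 : rate (fun t => -β (a + b - t)) (fun t => u (a + b - t)) η (a + b - s) * -1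
        = rate β u η s := by
      simp only [rate, sub_sub_cancel]; ring
    rw [h3] at h2
    have h4 : (fun t => ∫ x, η x * u (a + b - t) x) ∘ (fun t => a + b - t)
        = fun t => ∫ x, η x * u t x := by
      funext t; simp
    exact h4 ▸ h2

end Weak

/-! ### Entropy dissipation -/

/-- The nonnegative entropy density `q log (q/p) - q + p`; its integral is the KL divergence. -/
noncomputable def ent (q p : ℝ → Ed d → ℝ) (t : ℝ) (x : Ed d) : ℝ :=
  q t x * log (q t x / p t x) - q t x + p t x

/-- The integrand of the relative Fisher information. -/
noncomputable def fish (q p : ℝ → Ed d → ℝ) (t : ℝ) (x : Ed d) : ℝ :=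
  q t x * ‖gradient (fun y => log (q t y)) x - gradient (fun y => log (p t y)) x‖ ^ 2

/-- Convexity of the entropy: its tangent at `(q₀, p₀)` lies below it. -/
lemma tangent_le {q p q₀ p₀ : ℝ} (hq : 0 < q) (hp : 0 < p) (hq₀ : 0 < q₀) (hp₀ : 0 < p₀) :
    log (q₀ / p₀) * q + (1 - q₀ / p₀) * p ≤ q * log (q / p) - q + p := by
  have h1 : log ((q₀ / p₀) / (q / p)) ≤ (q₀ / p₀) / (q / p) - 1 :=
    log_le_sub_one_of_pos (by positivity)
  rw [log_div (by positivity) (by positivity)] at h1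
  have h2 := mul_le_mul_of_nonneg_left h1 hq.le
  have h3 : q * ((q₀ / p₀) / (q / p) - 1) = q₀ / p₀ * p - q := by field_simp
  rw [h3] at h2
  linarith

lemma ent_nonneg {q p : ℝ → Ed d → ℝ} {t : ℝ} {x : Ed d} (hq : 0 < q t x) (hp : 0 < p t x) :
    0 ≤ ent q p t x := by
  have := tangent_le hq hp one_pos one_pos
  simpa [ent] using this

section Static
variable {f g : Ed d → ℝ}

lemma pd_log (hf : ContDiff ℝ 2 f) (hf0 : ∀ x, 0 < f x) (i : Fin d) (x : Ed d) :
    pd i (fun y => log (f y)) x = pd i f x / f x := by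
  rw [pd_comp i (hasDerivAt_log (hf0 x).ne') (differentiable_of_C2 hf x)]
  field_simp

lemma contDiff_log (hf : ContDiff ℝ 2 f) (hf0 : ∀ x, 0 < f x) :
    ContDiff ℝ 2 (fun y => log (f y)) := hf.log fun x => (hf0 x).ne'

lemma norm_gradient_sub_sq (f g : Ed d → ℝ) (x : Ed d) :
    ‖gradient f x - gradient g x‖ ^ 2 = ∑ i, (pd i f x - pd i g x) ^ 2 := by
  rw [EuclideanSpace.norm_sq_eq]
  refine Finset.sum_congr rfl fun i _ => ?_
  rw [Real.norm_eq_abs, sq_abs, PiLp.sub_apply, gradient_apply, gradient_apply]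

/-- The pointwise entropy dissipation identity. -/
lemma entropy_identity (hf : ContDiff ℝ 2 f) (hg : ContDiff ℝ 2 g) (hf0 : ∀ x, 0 < f x)
    (hg0 : ∀ x, 0 < g x) (x : Ed d) :
    log (f x / g x) * Lst f x + (1 - f x / g x) * Lst g x
      = Lst (fun y => f y * log (f y / g y) - f y + g y) x
        - f x * ‖gradient (fun y => log (f y)) x - gradient (fun y => log (g y)) x‖ ^ 2 := by
  set A : Ed d → ℝ := fun y => log (f y) - log (g y) with hA
  have hlog : ∀ y, log (f y / g y) = A y := fun y => log_div (hf0 y).ne' (hg0 y).ne'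
  have hA2 : ContDiff ℝ 2 A := (contDiff_log hf hf0).sub (contDiff_log hg hg0)
  have hR2 : ContDiff ℝ 2 (fun y => f y / g y) := hf.div hg fun y => (hg0 y).ne'
  have df := differentiable_of_C2 hf
  have dg := differentiable_of_C2 hg
  have dA := differentiable_of_C2 hA2
  have dR := differentiable_of_C2 hR2
  have pA : ∀ i y, pd i A y = pd i f y / f y - pd i g y / g y := fun i y => by
    rw [← pd_log hf hf0, ← pd_log hg hg0]
    exact pd_sub i (differentiable_of_C2 (contDiff_log hf hf0) y)
      (differentiable_of_C2 (contDiff_log hg hg0) y)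
  have hRA : (fun y => f y / g y) = fun y => exp (A y) := by
    funext y
    rw [← hlog, exp_log (div_pos (hf0 y) (hg0 y))]
  have pR : ∀ i y, pd i (fun y => f y / g y) y = f y / g y * pd i A y := fun i y => by
    have h1 : f y / g y = exp (A y) := congrFun hRA y
    rw [hRA, h1]
    exact pd_comp i (Real.hasDerivAt_exp (A y)) (dA y)
  set H : Ed d → ℝ := fun y => f y * A y - f y + g y with hH
  have hHe : (fun y => f y * log (f y / g y) - f y + g y) = H := by
    funext y; simp only [hH, hlog]
  have p1 : ∀ i, pd i H = fun y => A y * pd i f y + (1 - f y / g y) * pd i g y := by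
    intro i; funext y
    rw [hH, pd_add (f := fun y => f y * A y - f y) i (((df y).fun_mul (dA y)).fun_sub (df y)) (dg y),
      pd_sub (f := fun y => f y * A y) i ((df y).fun_mul (dA y)) (df y), pd_mul i (df y) (dA y), pA]
    have := (hf0 y).ne'
    have := (hg0 y).ne'
    field_simp
    ring
  have p2 : ∀ i, pd i (pd i H) x = A x * pd i (pd i f) x + (1 - f x / g x) * pd i (pd i g) x
      + f x * pd i A x ^ 2 := by
    intro i
    have dpf := differentiable_pd hf i
    have dpg := differentiable_pd hg i
    have d1R : DifferentiableAt ℝ (fun y => 1 - f y / g y) x := (dR x).const_sub 1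
    have h1 : pd i (fun y => 1 - f y / g y) x = - pd i (fun y => f y / g y) x := by
      unfold pd; rw [fderiv_const_sub]; rfl
    rw [p1 i, pd_add (f := fun y => A y * pd i f y) i ((dA x).fun_mul (dpf x))
      (d1R.fun_mul (dpg x)), pd_mul i (dA x) (dpf x),
      pd_mul (f := fun y => 1 - f y / g y) i d1R (dpg x), h1, pR, pA]
    have := (hf0 x).ne'
    have := (hg0 x).ne'
    field_simp
    ring
  have pF : fderiv ℝ H x x = A x * fderiv ℝ f x x + (1 - f x / g x) * fderiv ℝ g x x := by
    rw [fderiv_eq_sum_pd H, fderiv_eq_sum_pd f, fderiv_eq_sum_pd g, Finset.mul_sum, Finset.mul_sum,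
      ← Finset.sum_add_distrib]
    refine Finset.sum_congr rfl fun i _ => ?_
    rw [p1 i]; ring
  have pL : lap H x = A x * lap f x + (1 - f x / g x) * lap g x + f x * ∑ i, pd i A x ^ 2 := by
    simp only [lap, p2, Finset.sum_add_distrib, Finset.mul_sum]
  have hN : ‖gradient (fun y => log (f y)) x - gradient (fun y => log (g y)) x‖ ^ 2
      = ∑ i, pd i A x ^ 2 := by
    rw [norm_gradient_sub_sq]
    refine Finset.sum_congr rfl fun i _ => ?_
    rw [pd_log hf hf0, pd_log hg hg0, pA]
  have hHx : H x = A x * f x + (1 - f x / g x) * g x := by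
    have := (hg0 x).ne'
    simp only [hH]; field_simp; ring
  rw [hHe, hN, hlog]
  simp only [Lst, pL, pF, hHx]
  ring

end Static

section Dissipation
variable {a b : ℝ} {β : ℝ → ℝ} {q p : ℝ → Ed d → ℝ}

lemma contDiff_ent (hq : Sol a b β q) (hp : Sol a b β p) {t : ℝ} (ht : t ∈ Icc a b) :
    ContDiff ℝ 2 (ent q p t) := by
  have h1 := hq.contDiff_x t ht
  have h2 := hp.contDiff_x t ht
  have h3 : ContDiff ℝ 2 fun x => log (q t x / p t x) :=
    (h1.div h2 fun x => (hp.pos t ht x).ne').log fun x =>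
      (div_pos (hq.pos t ht x) (hp.pos t ht x)).ne'
  exact ((h1.mul h3).sub h1).add h2

lemma fish_eq (hq : Sol a b β q) (hp : Sol a b β p) {t : ℝ} (ht : t ∈ Icc a b) (x : Ed d) :
    fish q p t x = q t x * ∑ i, pd i (fun y => log (q t y) - log (p t y)) x ^ 2 := by
  unfold fish
  rw [norm_gradient_sub_sq]
  congr 1
  refine Finset.sum_congr rfl fun i _ => ?_
  rw [pd_sub i (differentiable_of_C2 (contDiff_log (hq.contDiff_x t ht) (hq.pos t ht)) x)
    (differentiable_of_C2 (contDiff_log (hp.contDiff_x t ht) (hp.pos t ht)) x)]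

lemma continuous_fish (hq : Sol a b β q) (hp : Sol a b β p) {t : ℝ} (ht : t ∈ Icc a b) :
    Continuous (fish q p t) := by
  rw [show fish q p t = _ from funext fun x => fish_eq hq hp ht x]
  refine (hq.contDiff_x t ht).continuous.mul (continuous_finsetSum _ fun i _ => ?_)
  exact (continuous_pd (((contDiff_log (hq.contDiff_x t ht) (hq.pos t ht)).sub
    (contDiff_log (hp.contDiff_x t ht) (hp.pos t ht))).of_le (by norm_num)) i).pow 2

lemma fish_nonneg (hq : Sol a b β q) {t : ℝ} (ht : t ∈ Icc a b) (x : Ed d) :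
    0 ≤ fish q p t x := mul_nonneg (hq.pos t ht x).le (sq_nonneg _)

lemma integrable_klogq (hq : Sol a b β q) (hp : Sol a b β p) {t : ℝ} (ht : t ∈ Icc a b)
    (hkl : Integrable (fun x => q t x * |log (q t x / p t x)|)) :
    Integrable (fun x => q t x * log (q t x / p t x)) := by
  have hc : Continuous fun x => q t x * log (q t x / p t x) := by
    have h1 := (hq.contDiff_x t ht).continuous
    have h2 := (hp.contDiff_x t ht).continuous
    exact h1.mul ((h1.div h2 fun x => (hp.pos t ht x).ne').log fun x =>
      (div_pos (hq.pos t ht x) (hp.pos t ht x)).ne')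
  refine hkl.mono' hc.aestronglyMeasurable (Eventually.of_forall fun x => ?_)
  rw [norm_mul, Real.norm_eq_abs, Real.norm_eq_abs, abs_of_pos (hq.pos t ht x)]

lemma integrable_ent (hq : Sol a b β q) (hp : Sol a b β p) {t : ℝ} (ht : t ∈ Icc a b)
    (hkl : Integrable (fun x => q t x * |log (q t x / p t x)|)) : Integrable (ent q p t) :=
  ((integrable_klogq hq hp ht hkl).sub (hq.integrable ht)).add (hp.integrable ht)

lemma integral_ent (hq : Sol a b β q) (hp : Sol a b β p) {t : ℝ} (ht : t ∈ Icc a b)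
    (hkl : Integrable (fun x => q t x * |log (q t x / p t x)|)) :
    ∫ x, ent q p t x = KLt q p t := by
  have h1 := integrable_klogq hq hp ht hkl
  have h2 : Integrable (fun x => q t x * log (q t x / p t x) - q t x) := h1.sub (hq.integrable ht)
  unfold ent
  rw [integral_add h2 (hp.integrable ht), integral_sub h1 (hq.integrable ht), hq.mass_one t ht,
    hp.mass_one t ht, KLt]
  ring

lemma continuousOn_ent (hq : Sol a b β q) (hp : Sol a b β p) (x : Ed d) :
    ContinuousOn (fun t => ent q p t x) (Icc a b) := by
  have h1 := (hq.continuous_t x).continuousOn (s := Icc a b)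
  have h2 := (hp.continuous_t x).continuousOn (s := Icc a b)
  exact ((h1.mul ((h1.div h2 fun t ht => (hp.pos t ht x).ne').log fun t ht =>
    (div_pos (hq.pos t ht x) (hp.pos t ht x)).ne')).sub h1).add h2

/-- Measurability in time of the localized Fisher information. Only separate continuity is
available, so the spatial derivatives are realized as limits of difference quotients of
Carathéodory functions. -/
lemma aestronglyMeasurable_fish (hq : Sol a b β q) (hp : Sol a b β p) (hab : a ≤ b)
    {φ : Ed d → ℝ} (hφ : Continuous φ) :
    AEStronglyMeasurable (fun t => ∫ x, φ x * fish q p t x) (volume.restrict (Icc a b)) := by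
  let c : ℝ → ℝ := fun t => max a (min t b)
  have hc : Continuous c := by fun_prop
  have hcm : ∀ t, c t ∈ Icc a b := fun t => ⟨le_max_left _ _, max_le hab (min_le_right _ _)⟩
  have hce : ∀ t ∈ Icc a b, c t = t := fun t ht => by
    simp only [c]; rw [min_eq_left ht.2, max_eq_right ht.1]
  let A : ℝ → Ed d → ℝ := fun t x => log (q (c t) x) - log (p (c t) x)
  have hA2 : ∀ t, ContDiff ℝ 2 (A t) := fun t =>
    (contDiff_log (hq.contDiff_x _ (hcm t)) (hq.pos _ (hcm t))).sub
      (contDiff_log (hp.contDiff_x _ (hcm t)) (hp.pos _ (hcm t)))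
  have hAt : ∀ x, Continuous fun t => A t x := fun x =>
    (((hq.continuous_t x).comp hc).log fun t => (hq.pos _ (hcm t) x).ne').sub
      (((hp.continuous_t x).comp hc).log fun t => (hp.pos _ (hcm t) x).ne')
  have hAshift : ∀ v : Ed d, Measurable fun z : ℝ × Ed d => A z.1 (z.2 + v) := fun v =>
    measurable_uncurry_of_continuous_of_measurable (u := fun t x => A t (x + v))
      (fun x => hAt (x + v))
      (fun t => ((hA2 t).continuous.comp (continuous_id.add continuous_const)).measurable)
  have hqm : Measurable fun z : ℝ × Ed d => q (c z.1) z.2 :=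
    measurable_uncurry_of_continuous_of_measurable (u := fun t x => q (c t) x)
      (fun x => (hq.continuous_t x).comp hc) (fun t => (hq.contDiff_x _ (hcm t)).continuous.measurable)
  have hpdm : ∀ i, Measurable fun z : ℝ × Ed d => pd i (A z.1) z.2 := by
    intro i
    refine measurable_of_tendsto_metrizable (f := fun (n : ℕ) (z : ℝ × Ed d) =>
      (n : ℝ) • (A z.1 (z.2 + (n : ℝ)⁻¹ • EuclideanSpace.single i (1 : ℝ)) - A z.1 (z.2 + 0)))
      (fun n => by
        exact ((hAshift ((n : ℝ)⁻¹ • EuclideanSpace.single i (1 : ℝ))).sub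
          (hAshift 0)).const_smul (n : ℝ)) ?_
    rw [tendsto_pi_nhds]
    intro z
    have h1 := ((differentiable_of_C2 (hA2 z.1)) z.2).hasFDerivAt.lim
      (EuclideanSpace.single i (1 : ℝ)) (c := fun n : ℕ => (n : ℝ)) (l := atTop)
      (by simpa using tendsto_natCast_atTop_atTop (R := ℝ))
    simpa [pd] using h1
  have hm : Measurable fun z : ℝ × Ed d =>
      φ z.2 * (q (c z.1) z.2 * ∑ i, pd i (A z.1) z.2 ^ 2) :=
    (hφ.measurable.comp measurable_snd).mul
      (hqm.mul (Finset.measurable_fun_sum _ fun i _ => (hpdm i).pow_const 2))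
  have h2 : StronglyMeasurable fun t => ∫ x, φ x * (q (c t) x * ∑ i, pd i (A t) x ^ 2) :=
    hm.stronglyMeasurable.integral_prod_right
  refine h2.aestronglyMeasurable.congr ?_
  filter_upwards [ae_restrict_mem measurableSet_Icc] with t ht
  refine integral_congr_ae (Eventually.of_forall fun x => ?_)
  simp only [A, hce t ht, fish_eq hq hp ht]

/-- Localized entropy dissipation. At each time `s` the entropy is touched from below by its
tangent, which is linear in `(q, p)`, so that the weak equation differentiates it. -/
lemma localized_dissipation (hq : Sol a b β q) (hp : Sol a b β p)
    (hβ : (∀ t ∈ Icc a b, 0 ≤ β t) ∨ ∀ t ∈ Icc a b, β t ≤ 0) (hβc : Continuous β) (hab : a ≤ b)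
    (hkl : ∀ t ∈ Icc a b, Integrable (fun x => q t x * |log (q t x / p t x)|))
    (hfi : ∀ t ∈ Icc a b, Integrable (fish q p t))
    (hKc : ContinuousOn (KLt q p) (Icc a b))
    (hI : IntegrableOn (fun t => β t * relFisher q p t) (Icc a b))
    {φ : Ed d → ℝ} (hφ : ContDiff ℝ 2 φ) (hφs : HasCompactSupport φ) (hφ0 : ∀ x, 0 ≤ φ x)
    (hφ1 : ∀ x, φ x ≤ 1) :
    (∫ x, φ x * ent q p b x) - ∫ x, φ x * ent q p a x
      = ∫ t in a..b, β t / 2 * ((∫ x, Lad φ x * ent q p t x) - ∫ x, φ x * fish q p t x) := by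
  have hφabs : ∀ x, |φ x| ≤ 1 := fun x => by rw [abs_of_nonneg (hφ0 x)]; exact hφ1 x
  have hKc' : ContinuousOn (fun t => ∫ x, ent q p t x) (Icc a b) :=
    hKc.congr fun t ht => integral_ent hq hp ht (hkl t ht)
  have hcm : ∀ {m : Ed d → ℝ} {C : ℝ}, Continuous m → (∀ x, |m x| ≤ C) →
      ContinuousOn (fun t => ∫ x, m x * ent q p t x) (Icc a b) := fun hm hC =>
    continuousOn_integral_mul (fun t ht x => ent_nonneg (hq.pos t ht x) (hp.pos t ht x))
      (fun t ht => integrable_ent hq hp ht (hkl t ht)) hKc' (continuousOn_ent hq hp) hm hC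
  obtain ⟨CL, hCL⟩ := (hasCompactSupport_Lad hφs).exists_bound_of_continuous (continuous_Lad hφ)
  refine sub_eq_integral_of_touching (M := fun t => ∫ x, φ x * ent q p t x) hab
    (hcm hφ.continuous hφabs) ?_ ?_
  · intro s hs
    have q2 := hq.contDiff_x s hs
    have p2 := hp.contDiff_x s hs
    have hA2 : ContDiff ℝ 2 fun x => log (q s x / p s x) :=
      (q2.div p2 fun x => (hp.pos s hs x).ne').log fun x =>
        (div_pos (hq.pos s hs x) (hp.pos s hs x)).ne'
    have hB2 : ContDiff ℝ 2 fun x => 1 - q s x / p s x :=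
      contDiff_const.sub (q2.div p2 fun x => (hp.pos s hs x).ne')
    have hφA : ContDiff ℝ 2 fun x => φ x * log (q s x / p s x) := hφ.mul hA2
    have hφB : ContDiff ℝ 2 fun x => φ x * (1 - q s x / p s x) := hφ.mul hB2
    have hφAs : HasCompactSupport fun x => φ x * log (q s x / p s x) := hφs.mul_right
    have hφBs : HasCompactSupport fun x => φ x * (1 - q s x / p s x) := hφs.mul_right
    have hiA : ∀ {z : Ed d → ℝ}, Continuous z →
        Integrable fun x => φ x * log (q s x / p s x) * z x := fun hz =>
      (hφA.continuous.mul hz).integrable_of_hasCompactSupport hφAs.mul_right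
    have hiB : ∀ {z : Ed d → ℝ}, Continuous z →
        Integrable fun x => φ x * (1 - q s x / p s x) * z x := fun hz =>
      (hφB.continuous.mul hz).integrable_of_hasCompactSupport hφBs.mul_right
    refine ⟨fun t => (∫ x, φ x * log (q s x / p s x) * q t x)
      + ∫ x, φ x * (1 - q s x / p s x) * p t x, fun t ht => ?_, ?_, ?_⟩
    · have i1 := hiA (hq.contDiff_x t ht).continuous
      have i2 := hiB (hp.contDiff_x t ht).continuous
      beta_reduce
      rw [← integral_add i1 i2]
      refine integral_mono (i1.add i2) ((contDiff_ent hq hp ht).continuous.mul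
        hφ.continuous |>.integrable_of_hasCompactSupport hφs.mul_left |>.congr
          (Eventually.of_forall fun x => mul_comm _ _)) fun x => ?_
      have := mul_le_mul_of_nonneg_left (tangent_le (hq.pos t ht x) (hp.pos t ht x)
        (hq.pos s hs x) (hp.pos s hs x)) (hφ0 x)
      simp only [ent]
      linarith
    · beta_reduce
      rw [← integral_add (hiA q2.continuous) (hiB p2.continuous)]
      refine integral_congr_ae (Eventually.of_forall fun x => ?_)
      have := (hp.pos s hs x).ne'
      simp only [ent]
      field_simp
      ring
    · have h1 := (hasDerivWithinAt_integral hq hβ hβc hφA hφAs hs).add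
        (hasDerivWithinAt_integral hp hβ hβc hφB hφBs hs)
      refine h1.congr_deriv ?_
      have h2 := contDiff_ent hq hp hs
      have h3 : ∫ x, φ x * Lst (ent q p s) x = ∫ x, Lad φ x * ent q p s x := by
        rw [integral_mul_Lst h2 hφ hφs]; simp only [mul_comm]
      have j1 : Integrable fun x => φ x * Lst (ent q p s) x :=
        (hφ.continuous.mul (continuous_Lst h2)).integrable_of_hasCompactSupport hφs.mul_right
      have j2 : Integrable fun x => φ x * fish q p s x :=
        (hφ.continuous.mul (continuous_fish hq hp hs)).integrable_of_hasCompactSupport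
          hφs.mul_right
      rw [← h3, ← mul_add, ← integral_add (hiA (continuous_Lst q2)) (hiB (continuous_Lst p2)),
        ← integral_sub j1 j2]
      congr 1
      refine integral_congr_ae (Eventually.of_forall fun x => ?_)
      have h4 := entropy_identity q2 p2 (hq.pos s hs) (hp.pos s hs) x
      have h5 : log (q s x / p s x) * Lst (q s) x + (1 - q s x / p s x) * Lst (p s) x
        = Lst (ent q p s) x - fish q p s x := h4
      simp only
      rw [← mul_sub, ← h5]; ring
  · simp only [mul_sub]
    refine IntegrableOn.sub (((hβc.div_const 2).continuousOn.mul
      (hcm (continuous_Lad hφ) hCL)).integrableOn_Icc) ?_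
    refine Integrable.mono' (hI.norm) ((hβc.div_const 2).aestronglyMeasurable.mul
      (aestronglyMeasurable_fish hq hp hab hφ.continuous)) ?_
    filter_upwards [ae_restrict_mem measurableSet_Icc] with t ht
    rw [norm_mul, norm_mul, norm_div, Real.norm_ofNat]
    have h1 : ‖∫ x, φ x * fish q p t x‖ ≤ ‖relFisher q p t‖ := by
      refine (norm_integral_le_of_norm_le (hfi t ht) (Eventually.of_forall fun x => ?_)).trans
        (le_abs_self _)
      rw [norm_mul, Real.norm_eq_abs, Real.norm_eq_abs, abs_of_nonneg (fish_nonneg hq ht x)]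
      exact mul_le_of_le_one_left (fish_nonneg hq ht x) (hφabs x)
    have h2 := mul_le_mul_of_nonneg_left h1 (norm_nonneg (β t))
    have h3 := mul_nonneg (norm_nonneg (β t)) (norm_nonneg (∫ x, φ x * fish q p t x))
    linarith

/-- Entropy dissipation in integrated form, on an interval where `β` has a constant sign. -/
theorem dissipation (hq : Sol a b β q) (hp : Sol a b β p)
    (hβ : (∀ t ∈ Icc a b, 0 ≤ β t) ∨ ∀ t ∈ Icc a b, β t ≤ 0) (hβc : Continuous β) (hab : a ≤ b)
    (hkl : ∀ t ∈ Icc a b, Integrable (fun x => q t x * |log (q t x / p t x)|))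
    (hfi : ∀ t ∈ Icc a b, Integrable (fish q p t))
    (hKc : ContinuousOn (KLt q p) (Icc a b))
    (hI : IntegrableOn (fun t => β t * relFisher q p t) (Icc a b)) :
    KLt q p b - KLt q p a = ∫ t in a..b, -(β t / 2 * relFisher q p t) := by
  obtain ⟨χ, K, hχ2, hχs, hχ0, hχ1, hχR, hχK, hχL⟩ := exists_cutoff d
  have hK0 : 0 ≤ K := (abs_nonneg _).trans (hχK 0 0)
  have hloc := fun n => localized_dissipation hq hp hβ hβc hab hkl hfi hKc hI (hχ2 n) (hχs n)
    (hχ0 n) (hχ1 n)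
  have hlim : ∀ {f : Ed d → ℝ}, Continuous f → Integrable f → (∀ x, 0 ≤ f x) →
      Tendsto (fun n => ∫ x, χ n x * f x) atTop (𝓝 (∫ x, f x)) := by
    intro f hf hi h0
    refine tendsto_integral_of_dominated_convergence f
      (fun n => ((hχ2 n).continuous.mul hf).aestronglyMeasurable) hi
      (fun n => Eventually.of_forall fun x => ?_) (Eventually.of_forall fun x => ?_)
    · rw [norm_mul, Real.norm_eq_abs, Real.norm_eq_abs, abs_of_nonneg (hχ0 n x),
        abs_of_nonneg (h0 x)]
      exact mul_le_of_le_one_left (h0 x) (hχ1 n x)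
    · refine tendsto_const_nhds.congr' ?_
      filter_upwards [hχR ‖x‖] with n hn
      rw [hn x le_rfl, one_mul]
  have hent : ∀ t ∈ Icc a b, Tendsto (fun n => ∫ x, χ n x * ent q p t x) atTop (𝓝 (KLt q p t)) := by
    intro t ht
    rw [← integral_ent hq hp ht (hkl t ht)]
    exact hlim (contDiff_ent hq hp ht).continuous (integrable_ent hq hp ht (hkl t ht))
      fun x => ent_nonneg (hq.pos t ht x) (hp.pos t ht x)
  have hfl : ∀ t ∈ Icc a b,
      Tendsto (fun n => ∫ x, χ n x * fish q p t x) atTop (𝓝 (relFisher q p t)) := fun t ht =>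
    hlim (continuous_fish hq hp ht) (hfi t ht) (fish_nonneg hq ht)
  have hLb : ∀ t ∈ Icc a b, ∀ n x, ‖Lad (χ n) x * ent q p t x‖ ≤ K * ent q p t x := by
    intro t ht n x
    have h0 := ent_nonneg (hq.pos t ht x) (hp.pos t ht x)
    rw [norm_mul, Real.norm_eq_abs, Real.norm_eq_abs, abs_of_nonneg h0]
    exact mul_le_mul_of_nonneg_right (hχK n x) h0
  have hLl : ∀ t ∈ Icc a b, Tendsto (fun n => ∫ x, Lad (χ n) x * ent q p t x) atTop (𝓝 0) := by
    intro t ht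
    have h1 : Tendsto (fun n => ∫ x, Lad (χ n) x * ent q p t x) atTop
        (𝓝 (∫ _ : Ed d, (0 : ℝ))) := by
      refine tendsto_integral_of_dominated_convergence (fun x => K * ent q p t x)
        (fun n => ((continuous_Lad (hχ2 n)).mul
          (contDiff_ent hq hp ht).continuous).aestronglyMeasurable)
        ((integrable_ent hq hp ht (hkl t ht)).const_mul K)
        (fun n => Eventually.of_forall (hLb t ht n)) (Eventually.of_forall fun x => ?_)
      simpa using (hχL x).mul_const (ent q p t x)
    simpa using h1
  have hleft := (hent b ⟨hab, le_rfl⟩).sub (hent a ⟨le_rfl, hab⟩)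
  refine tendsto_nhds_unique hleft ?_
  simp only [hloc]
  refine intervalIntegral.tendsto_integral_filter_of_dominated_convergence
    (fun t => |β t / 2| * (K * KLt q p t) + ‖β t * relFisher q p t‖)
    (Eventually.of_forall fun n => ?_) (Eventually.of_forall fun n =>
      Eventually.of_forall fun t ht => ?_) ?_ (Eventually.of_forall fun t ht => ?_)
  · rw [uIoc_of_le hab]
    have hc : ContinuousOn (fun t => ∫ x, Lad (χ n) x * ent q p t x) (Icc a b) :=
      continuousOn_integral_mul (fun t ht x => ent_nonneg (hq.pos t ht x) (hp.pos t ht x))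
        (fun t ht => integrable_ent hq hp ht (hkl t ht))
        (hKc.congr fun t ht => integral_ent hq hp ht (hkl t ht)) (continuousOn_ent hq hp)
        (continuous_Lad (hχ2 n)) (hχK n)
    have h1 := (hβc.div_const 2).aestronglyMeasurable.mul
      ((hc.aestronglyMeasurable measurableSet_Icc).sub
        (aestronglyMeasurable_fish hq hp hab (hχ2 n).continuous))
    exact h1.mono_measure (Measure.restrict_mono Ioc_subset_Icc_self le_rfl)
  · rw [uIoc_of_le hab] at ht
    have ht' := Ioc_subset_Icc_self ht
    have h1 : ‖∫ x, χ n x * fish q p t x‖ ≤ ‖relFisher q p t‖ := by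
      refine (norm_integral_le_of_norm_le (hfi t ht') (Eventually.of_forall fun x => ?_)).trans
        (le_abs_self _)
      rw [norm_mul, Real.norm_eq_abs, Real.norm_eq_abs, abs_of_nonneg (fish_nonneg hq ht' x),
        abs_of_nonneg (hχ0 n x)]
      exact mul_le_of_le_one_left (fish_nonneg hq ht' x) (hχ1 n x)
    have h2 : ‖∫ x, Lad (χ n) x * ent q p t x‖ ≤ K * KLt q p t := by
      have := norm_integral_le_of_norm_le ((integrable_ent hq hp ht' (hkl t ht')).const_mul K)
        (Eventually.of_forall (hLb t ht' n))
      rwa [integral_const_mul, integral_ent hq hp ht' (hkl t ht')] at this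
    have h3 : |β t / 2| * ‖relFisher q p t‖ ≤ ‖β t * relFisher q p t‖ := by
      rw [norm_mul, Real.norm_eq_abs (β t), abs_div, abs_two]
      have := mul_nonneg (abs_nonneg (β t)) (norm_nonneg (relFisher q p t))
      linarith
    rw [norm_mul, Real.norm_eq_abs]
    calc _ ≤ |β t / 2| * (K * KLt q p t + ‖relFisher q p t‖) :=
          mul_le_mul_of_nonneg_left ((norm_sub_le _ _).trans (add_le_add h2 h1)) (abs_nonneg _)
      _ ≤ _ := by rw [mul_add]; linarith
  · refine IntervalIntegrable.add ?_ ?_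
    · exact ((hβc.div_const 2).abs.continuousOn.mul
        (continuousOn_const.mul hKc)).intervalIntegrable_of_Icc hab
    · rw [intervalIntegrable_iff_integrableOn_Icc_of_le hab]
      exact hI.norm
  · rw [uIoc_of_le hab] at ht
    have ht' := Ioc_subset_Icc_self ht
    have := ((hLl t ht').sub (hfl t ht')).const_mul (β t / 2)
    simpa using this

end Dissipation

/-! ### The pointwise dissipation identity and the weighted identity -/

lemma _root_.AdmissibleVP.sol {T : ℝ} {β : ℝ → ℝ} {u : ℝ → Ed d → ℝ} (h : AdmissibleVP d T β u) :
    Sol 0 T β u where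
  pos := h.pos
  contDiff_t := h.contDiff_t
  contDiff_x := h.contDiff_x
  mass_one := h.mass_one
  eq t ht x := by rw [h.fokkerPlanck t ht x, diverg_vpField (h.contDiff_x t ht)]

/-- Where `β` vanishes both densities are stationary, hence so is the entropy integrand. -/
lemma integral_deriv_eq_zero {a b : ℝ} {β : ℝ → ℝ} {q p : ℝ → Ed d → ℝ} (hq : Sol a b β q)
    (hp : Sol a b β p) {t : ℝ} (ht : t ∈ Icc a b) (hβ : β t = 0) :
    ∫ x, deriv (fun s => q s x * log (q s x / p s x)) t = 0 := by
  have h : ∀ x, deriv (fun s => q s x * log (q s x / p s x)) t = 0 := by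
    intro x
    have h1 : HasDerivAt (fun s => q s x) 0 t := (hq.hasDerivAt ht x).congr_deriv (by simp [hβ])
    have h2 : HasDerivAt (fun s => p s x) 0 t := (hp.hasDerivAt ht x).congr_deriv (by simp [hβ])
    have hp0 := (hp.pos t ht x).ne'
    have hq0 := (hq.pos t ht x).ne'
    have h3 := h1.fun_mul ((h1.fun_div h2 hp0).log (div_ne_zero hq0 hp0))
    exact (h3.congr_deriv (by simp)).deriv
  simp [h]

/-- On a compact interval where neither `ω` nor `β` vanishes, the derivative of the KL divergence
is `-(β/2) I` almost everywhere. -/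
lemma ae_deriv_eq {T : ℝ} {β : ℝ → ℝ} (hβ : Continuous β) {q p : ℝ → Ed d → ℝ}
    (hq : Sol 0 T β q) (hp : Sol 0 T β p) (hreg : VPReg d T q p)
    {ω : ℝ → ℝ} (hω : Continuous ω)
    (hInt : IntegrableOn (fun t => ω t * (β t * relFisher q p t)) (Icc 0 T))
    {r s : ℝ} (hrs : r ≤ s) (hsub : Icc r s ⊆ Icc 0 T)
    (hne : ∀ t ∈ Icc r s, ω t ≠ 0 ∧ β t ≠ 0) :
    ∀ᵐ t, t ∈ Ioo r s → ∫ x, deriv (fun s => q s x * log (q s x / p s x)) t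
      = -(β t / 2 * relFisher q p t) := by
  have hr0 : 0 ≤ r := (hsub ⟨le_rfl, hrs⟩).1
  have hsT : s ≤ T := (hsub ⟨hrs, le_rfl⟩).2
  have hKc : ContinuousOn (KLt q p) (Icc 0 T) := fun t ht =>
    (hreg.kl_hasDeriv t ht).continuousAt.continuousWithinAt
  have hI : IntegrableOn (fun t => β t * relFisher q p t) (Icc r s) := by
    have hinv : ContinuousOn (fun t => (ω t)⁻¹) (Icc r s) :=
      hω.continuousOn.inv₀ fun t ht => (hne t ht).1
    refine ((hInt.mono_set hsub).continuousOn_mul hinv isCompact_Icc).congr_fun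
      (fun t ht => ?_) measurableSet_Icc
    have := (hne t ht).1
    field_simp
  have hsign : (∀ t ∈ Icc r s, 0 ≤ β t) ∨ ∀ t ∈ Icc r s, β t ≤ 0 := by
    by_contra! hcon
    obtain ⟨⟨t, ht, htn⟩, u, hu, hup⟩ := hcon
    obtain ⟨z, hz, hz0⟩ := isPreconnected_Icc.intermediate_value ht hu hβ.continuousOn
      (show (0 : ℝ) ∈ Icc (β t) (β u) from ⟨htn.le, hup.le⟩)
    exact (hne z hz).2 hz0
  have hJ : IntervalIntegrable (fun t => -(β t / 2 * relFisher q p t)) volume r s := by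
    rw [intervalIntegrable_iff_integrableOn_Icc_of_le hrs]
    exact (hI.const_mul (-(1 / 2))).congr (Eventually.of_forall fun t => by ring)
  have hdis : ∀ t ∈ Icc r s,
      KLt q p t = KLt q p r + ∫ z in r..t, -(β z / 2 * relFisher q p z) := by
    intro t ht
    have hs' : Icc r t ⊆ Icc r s := Icc_subset_Icc_right ht.2
    have h0 : Icc r t ⊆ Icc 0 T := hs'.trans hsub
    have := dissipation (hq.mono hr0 (ht.2.trans hsT)) (hp.mono hr0 (ht.2.trans hsT))
      (hsign.imp (fun h z hz => h z (hs' hz)) fun h z hz => h z (hs' hz)) hβ ht.1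
      (fun z hz => hreg.int_kl z (h0 hz)) (fun z hz => hreg.int_fisher z (h0 hz))
      (hKc.mono h0) (hI.mono_set hs')
    linarith
  filter_upwards [hJ.ae_hasDerivAt_integral] with t ht hts
  have hts' := Ioo_subset_Icc_self hts
  have h1 := (ht (by rw [uIcc_of_le hrs]; exact hts') r (by simp)).const_add (KLt q p r)
  refine (hreg.kl_hasDeriv t (hsub hts')).unique (h1.congr_of_eventuallyEq ?_)
  filter_upwards [Ioo_mem_nhds hts.1 hts.2] with z hz
  exact hdis z (Ioo_subset_Icc_self hz)

/-- The pointwise dissipation identity, weighted by `ω`. The open set where `ω β ≠ 0` is covered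
by countably many rational intervals. -/
lemma ae_weighted_deriv_eq {T : ℝ} {β : ℝ → ℝ} (hβ : Continuous β) {q p : ℝ → Ed d → ℝ}
    (hq : Sol 0 T β q) (hp : Sol 0 T β p) (hreg : VPReg d T q p)
    {ω : ℝ → ℝ} (hω : Continuous ω)
    (hInt : IntegrableOn (fun t => ω t * (β t * relFisher q p t)) (Icc 0 T)) :
    ∀ᵐ t, t ∈ Ioo 0 T → ω t * ∫ x, deriv (fun s => q s x * log (q s x / p s x)) t
      = -(1 / 2) * (ω t * (β t * relFisher q p t)) := by
  have hall : ∀ᵐ t : ℝ, ∀ rs : ℚ × ℚ, (rs.1 : ℝ) ≤ rs.2 → Icc (rs.1 : ℝ) rs.2 ⊆ Icc 0 T →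
      (∀ t ∈ Icc (rs.1 : ℝ) rs.2, ω t ≠ 0 ∧ β t ≠ 0) → t ∈ Ioo (rs.1 : ℝ) rs.2 →
      ∫ x, deriv (fun s => q s x * log (q s x / p s x)) t = -(β t / 2 * relFisher q p t) := by
    rw [ae_all_iff]
    intro rs
    by_cases h : (rs.1 : ℝ) ≤ rs.2 ∧ Icc (rs.1 : ℝ) rs.2 ⊆ Icc 0 T ∧
        ∀ t ∈ Icc (rs.1 : ℝ) rs.2, ω t ≠ 0 ∧ β t ≠ 0
    · filter_upwards [ae_deriv_eq hβ hq hp hreg hω hInt h.1 h.2.1 h.2.2] with t ht _ _ _ hts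
      exact ht hts
    · exact Eventually.of_forall fun t h1 h2 h3 => absurd ⟨h1, h2, h3⟩ h
  filter_upwards [hall] with t ht htT
  by_cases hω0 : ω t = 0
  · simp [hω0]
  by_cases hβ0 : β t = 0
  · simp [integral_deriv_eq_zero hq hp (Ioo_subset_Icc_self htT) hβ0, hβ0]
  have hnhds : ∀ᶠ z in 𝓝 t, z ∈ Icc 0 T ∧ ω z ≠ 0 ∧ β z ≠ 0 := by
    filter_upwards [Icc_mem_nhds htT.1 htT.2, hω.continuousAt.eventually_ne hω0,
      hβ.continuousAt.eventually_ne hβ0] with z h1 h2 h3 using ⟨h1, h2, h3⟩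
  obtain ⟨l, u, hlu, hsub⟩ := mem_nhds_iff_exists_Ioo_subset.1 hnhds
  obtain ⟨r, hr1, hr2⟩ := exists_rat_btwn hlu.1
  obtain ⟨s, hs1, hs2⟩ := exists_rat_btwn hlu.2
  have hmem : ∀ z ∈ Icc (r : ℝ) s, z ∈ Icc 0 T ∧ ω z ≠ 0 ∧ β z ≠ 0 := fun z hz =>
    hsub ⟨hr1.trans_le hz.1, hz.2.trans_lt hs2⟩
  rw [ht (r, s) (hr2.trans hs1).le (fun z hz => (hmem z hz).1) (fun z hz => (hmem z hz).2)
    ⟨hr2, hs1⟩]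
  ring

end VP

/-- **Weighted integration-by-parts identity (Proposition 2).**
For admissible VP densities `q, p` satisfying the regularity assumptions, a `C¹` weight
`ω` with `ω(0) = 0`, and `KL(T) = 0`,
`∫₀ᵀ ω(t) (β(t)/2) I(t) dt = ∫₀ᵀ ω'(t) KL(t) dt`. -/
theorem weighted_score_matching_integration_by_parts
    {d : ℕ} (hd : 1 ≤ d) {T : ℝ} (hT : 0 < T) {β : ℝ → ℝ} (hβ : Continuous β)
    {q p : ℝ → EuclideanSpace ℝ (Fin d) → ℝ}
    (hq : AdmissibleVP d T β q) (hp : AdmissibleVP d T β p)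
    (hreg : VPReg d T q p)
    (ω : ℝ → ℝ) (hω : ContDiff ℝ 1 ω) (hω0 : ω 0 = 0)
    (hKLT : KLt q p T = 0)
    (hint1 : IntervalIntegrable (fun t => ω t * (β t * relFisher q p t)) volume 0 T)
    (hint2 : IntervalIntegrable (fun t => deriv ω t * KLt q p t) volume 0 T) :
    ∫ t in (0 : ℝ)..T, ω t * (β t / 2) * relFisher q p t
      = ∫ t in (0 : ℝ)..T, deriv ω t * KLt q p t := by
  have hint1' := (intervalIntegrable_iff_integrableOn_Icc_of_le hT.le).1 hint1
  have hae := VP.ae_weighted_deriv_eq hβ hq.sol hp.sol hreg hω.continuous hint1'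
  have hae' : ∀ᵐ t, t ∈ uIoc 0 T →
      -(1 / 2) * (ω t * (β t * relFisher q p t))
        = ω t * ∫ x, deriv (fun s => q s x * log (q s x / p s x)) t := by
    filter_upwards [hae, Measure.ae_ne volume T] with t ht htT hm
    rw [uIoc_of_le hT.le] at hm
    exact (ht ⟨hm.1, lt_of_le_of_ne hm.2 htT⟩).symm
  have hint3 : IntervalIntegrable (fun t => ω t *
      ∫ x, deriv (fun s => q s x * log (q s x / p s x)) t) volume 0 T :=
    (hint1.const_mul (-(1 / 2))).congr_ae
      ((ae_restrict_iff' measurableSet_uIoc).2 hae')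
  have hftc := intervalIntegral.integral_eq_sub_of_hasDerivAt (a := 0) (b := T)
    (f := fun t => ω t * KLt q p t)
    (fun t ht => ((hω.differentiable one_ne_zero t).hasDerivAt).fun_mul
      (hreg.kl_hasDeriv t (by rwa [uIcc_of_le hT.le] at ht))) (hint2.add hint3)
  rw [intervalIntegral.integral_add hint2 hint3, hω0, hKLT,
    ← intervalIntegral.integral_congr_ae hae', intervalIntegral.integral_const_mul] at hftc
  have h1 : ∫ t in (0 : ℝ)..T, ω t * (β t / 2) * relFisher q p t
      = 1 / 2 * ∫ t in (0 : ℝ)..T, ω t * (β t * relFisher q p t) := by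
    rw [← intervalIntegral.integral_const_mul]
    exact intervalIntegral.integral_congr fun t _ => by ring
  rw [h1]
  linarith
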